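/- arXiv:1203.2963 — 2 statements merged into one kernel-verified Lean document; each statement's English description precedes it below -/
import Mathlib

section
/- Let A be a dg algebra over F₂ and M a dg (A,A)-bimodule. For ξ ∈ HC_k(M), write ξ = Σ_ℓ c_ℓ r_ℓ ⊗ m_ℓ as a linear combination of pure tensors. Then the element ξ^{⊗2} = Σ_ℓ c_ℓ² r_ℓ ⊗ (m_ℓ ⊗ r_ℓ ⊗ m_ℓ) of HC_{2k}(M ⊗̃_A M) is well-defined modulo the image of 1+τ, i.e., it does not depend on the chosen expression of ξ as a sum of pure tensors. -/
noncomputable section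
open TensorProduct

namespace LT

/-- A differential graded (dg) algebra over a commutative ring `k`: a chain complex with a
degree `-1` differential together with an associative unital multiplication satisfying the
(signed) Leibniz rule; over `𝔽₂` the signs are invisible. The grading is given by an internal
direct sum decomposition into submodules. -/
structure DGA (k : Type) [CommRing k] : Type 1 where
  V : Type
  [acg : AddCommGroup V]
  [mod : Module k V]
  gr : ℤ → Submodule k V
  internal : DirectSum.IsInternal gr
  d : V →ₗ[k] V
  d_d : ∀ x, d (d x) = 0
  d_gr : ∀ i, ∀ x ∈ gr i, d x ∈ gr (i - 1)
  mul : V →ₗ[k] V →ₗ[k] V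
  mul_assoc' : ∀ x y z, mul (mul x y) z = mul x (mul y z)
  one : V
  one_gr : one ∈ gr 0
  one_mul' : ∀ x, mul one x = x
  mul_one' : ∀ x, mul x one = x
  mul_gr : ∀ i j, ∀ x ∈ gr i, ∀ y ∈ gr j, mul x y ∈ gr (i + j)
  leibniz : ∀ i, ∀ x ∈ gr i, ∀ y, d (mul x y) = mul (d x) y + (Int.negOnePow i : ℤ) • mul x (d y)

attribute [instance] DGA.acg
attribute [instance 2000] DGA.mod

variable {k : Type} [CommRing k]

/-- A dg `(A,A)`-bimodule over a dg algebra `A`. -/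
structure DGBimod (A : DGA k) : Type 1 where
  V : Type
  [acg : AddCommGroup V]
  [mod : Module k V]
  gr : ℤ → Submodule k V
  internal : DirectSum.IsInternal gr
  d : V →ₗ[k] V
  d_d : ∀ x, d (d x) = 0
  d_gr : ∀ i, ∀ x ∈ gr i, d x ∈ gr (i - 1)
  actL : A.V →ₗ[k] V →ₗ[k] V
  actR : V →ₗ[k] A.V →ₗ[k] V
  actL_one : ∀ m, actL A.one m = m
  actR_one : ∀ m, actR m A.one = m
  actL_mul : ∀ a b m, actL (A.mul a b) m = actL a (actL b m)
  actR_mul : ∀ m a b, actR (actR m a) b = actR m (A.mul a b)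
  actLR : ∀ a m b, actR (actL a m) b = actL a (actR m b)
  actL_gr : ∀ i j, ∀ a ∈ A.gr i, ∀ m ∈ gr j, actL a m ∈ gr (i + j)
  actR_gr : ∀ i j, ∀ m ∈ gr i, ∀ a ∈ A.gr j, actR m a ∈ gr (i + j)
  leibnizL : ∀ i, ∀ a ∈ A.gr i, ∀ m, d (actL a m) = actL (A.d a) m + (Int.negOnePow i : ℤ) • actL a (d m)
  leibnizR : ∀ j, ∀ m ∈ gr j, ∀ a, d (actR m a) = actR (d m) a + (Int.negOnePow j : ℤ) • actR m (A.d a)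

attribute [instance] DGBimod.acg
attribute [instance 2000] DGBimod.mod

/-- The diagonal bimodule: `A` viewed as a bimodule over itself. -/
def DGA.diag (A : DGA k) : DGBimod A where
  V := A.V
  gr := A.gr
  internal := A.internal
  d := A.d
  d_d := A.d_d
  d_gr := A.d_gr
  actL := A.mul
  actR := A.mul
  actL_one := A.one_mul'
  actR_one := A.mul_one'
  actL_mul := fun a b m => A.mul_assoc' a b m
  actR_mul := fun m a b => A.mul_assoc' m a b
  actLR := fun a m b => A.mul_assoc' a m b
  actL_gr := A.mul_gr
  actR_gr := A.mul_gr
  leibnizL := A.leibniz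
  leibnizR := A.leibniz

variable {A : DGA k}

/-- A homomorphism of dg bimodules of degree `s`: a linear map raising degree by `s`,
commuting with the differentials and the two actions. -/
def IsBHom (M N : DGBimod A) (s : ℤ) (f : M.V →ₗ[k] N.V) : Prop :=
  (∀ i, ∀ x ∈ M.gr i, f x ∈ N.gr (i + s)) ∧
  (∀ x, f (M.d x) = N.d (f x)) ∧
  (∀ a m, f (M.actL a m) = N.actL a (f m)) ∧
  (∀ m a, f (M.actR m a) = N.actR (f m) a)

/-- Graded maps of degree `s` compatible with the bimodule actions (no compatibility with the
differential required); these are used as homotopies. -/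
def grHomSub (M N : DGBimod A) (s : ℤ) : Submodule k (M.V →ₗ[k] N.V) where
  carrier := {f | (∀ i, ∀ x ∈ M.gr i, f x ∈ N.gr (i + s)) ∧
    (∀ a m, f (M.actL a m) = N.actL a (f m)) ∧
    (∀ m a, f (M.actR m a) = N.actR (f m) a)}
  add_mem' := by
    rintro f g ⟨hf1, hf2, hf3⟩ ⟨hg1, hg2, hg3⟩
    refine ⟨fun i x hx => ?_, fun a m => ?_, fun m a => ?_⟩ <;>
      simp [LinearMap.add_apply, hf2, hg2, hf3, hg3]
    exact Submodule.add_mem _ (hf1 i x hx) (hg1 i x hx)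
  zero_mem' := by
    refine ⟨fun i x hx => ?_, fun a m => ?_, fun m a => ?_⟩ <;> simp
  smul_mem' := by
    rintro c f ⟨hf1, hf2, hf3⟩
    refine ⟨fun i x hx => ?_, fun a m => ?_, fun m a => ?_⟩ <;>
      simp [LinearMap.smul_apply, hf2, hf3]
    exact Submodule.smul_mem _ _ (hf1 i x hx)

/-- Bimodule chain maps of degree `s`, as a submodule of all linear maps. -/
def bcmSub (M N : DGBimod A) (s : ℤ) : Submodule k (M.V →ₗ[k] N.V) where
  carrier := {f | IsBHom M N s f}
  add_mem' := by
    rintro f g ⟨hf1, hf0, hf2, hf3⟩ ⟨hg1, hg0, hg2, hg3⟩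
    refine ⟨fun i x hx => ?_, fun x => ?_, fun a m => ?_, fun m a => ?_⟩ <;>
      simp [LinearMap.add_apply, hf0, hg0, hf2, hg2, hf3, hg3]
    exact Submodule.add_mem _ (hf1 i x hx) (hg1 i x hx)
  zero_mem' := by
    refine ⟨fun i x hx => ?_, fun x => ?_, fun a m => ?_, fun m a => ?_⟩ <;> simp
  smul_mem' := by
    rintro c f ⟨hf1, hf0, hf2, hf3⟩
    refine ⟨fun i x hx => ?_, fun x => ?_, fun a m => ?_, fun m a => ?_⟩ <;>
      simp [LinearMap.smul_apply, hf0, hf2, hf3]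
    exact Submodule.smul_mem _ _ (hf1 i x hx)

/-- The nullhomotopic degree-`s` maps `d ∘ h + h ∘ d` for `h` a degree `s+1` bimodule map. -/
def nullHtpSub (M N : DGBimod A) (s : ℤ) : Submodule k (M.V →ₗ[k] N.V) :=
  Submodule.map
    ((LinearMap.llcomp k M.V N.V N.V N.d) + (LinearMap.lcomp k N.V M.d))
    (grHomSub M N (s + 1))

/-- Homotopy classes of degree-`s` bimodule chain maps `M → N`; for `M` a cell retract this
computes morphisms `Σ^s M → N` in the derived category of dg bimodules. -/
def HtpyHom (M N : DGBimod A) (s : ℤ) :=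
  bcmSub M N s ⧸ Submodule.comap (bcmSub M N s).subtype (nullHtpSub M N s)

instance (M N : DGBimod A) (s : ℤ) : AddCommGroup (HtpyHom M N s) :=
  inferInstanceAs (AddCommGroup (_ ⧸ _))
instance (M N : DGBimod A) (s : ℤ) : Module k (HtpyHom M N s) :=
  inferInstanceAs (Module k (_ ⧸ _))


/-- Homology in degree `n` of a graded module with "relations": the degree-`n` part of the
homology of the quotient complex `(T/N, d)` where the grading of `T/N` is induced by `gr`.
Taking `N = ⊥` gives ordinary graded homology. -/
def Hgr (T : Type) [AddCommGroup T] [Module k T] (gr : ℤ → Submodule k T)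
    (N : Submodule k T) (d : T →ₗ[k] T) (n : ℤ) : Type :=
  ↥((gr n ⊔ N) ⊓ Submodule.comap d N) ⧸
    Submodule.comap ((gr n ⊔ N) ⊓ Submodule.comap d N).subtype
      (Submodule.map d (gr (n + 1) ⊔ N) ⊔ N)

instance (T : Type) [AddCommGroup T] [Module k T] (gr : ℤ → Submodule k T)
    (N : Submodule k T) (d : T →ₗ[k] T) (n : ℤ) : AddCommGroup (Hgr T gr N d n) :=
  inferInstanceAs (AddCommGroup (_ ⧸ _))
instance (T : Type) [AddCommGroup T] [Module k T] (gr : ℤ → Submodule k T)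
    (N : Submodule k T) (d : T →ₗ[k] T) (n : ℤ) : Module k (Hgr T gr N d n) :=
  inferInstanceAs (Module k (_ ⧸ _))

/-- `f` induces an isomorphism on (graded) homology, with a degree shift `s`; stated
elementarily: the induced map on homology classes is surjective and injective. -/
def IsQIsoDeg (T S : Type) [AddCommGroup T] [Module k T] [AddCommGroup S] [Module k S]
    (grT : ℤ → Submodule k T) (grS : ℤ → Submodule k S)
    (dT : T →ₗ[k] T) (dS : S →ₗ[k] S) (s : ℤ) (f : T →ₗ[k] S) : Prop :=
  ∀ n : ℤ,
    (∀ y ∈ grS (n + s), dS y = 0 →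
      ∃ x ∈ grT n, dT x = 0 ∧ f x - y ∈ Submodule.map dS (grS (n + s + 1))) ∧
    (∀ x ∈ grT n, dT x = 0 → f x ∈ Submodule.map dS (grS (n + s + 1)) →
      x ∈ Submodule.map dT (grT (n + 1)))

variable {A : DGA k}

/-- The bilinear "sandwich" map `(a, b) ↦ a · m · b` for a fixed element `m` of a bimodule. -/
def sandwich (M : DGBimod A) (m : M.V) : A.V →ₗ[k] A.V →ₗ[k] M.V :=
  LinearMap.mk₂ k (fun a b => M.actR (M.actL a m) b)
    (fun a₁ a₂ b => by simp)
    (fun c a b => by simp)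
    (fun a b₁ b₂ => by simp)
    (fun c a b => by simp)

/-- The bimodule map `A ⊗ A → M`, `a ⊗ b ↦ a · m · b`. -/
def sandwichT (M : DGBimod A) (m : M.V) : (A.V ⊗[k] A.V) →ₗ[k] M.V :=
  TensorProduct.lift (sandwich M m)

/-- `S'/S` is a free dg bimodule: there is a family of "generators" `g i` of degrees `deg i`,
closed cycles modulo `S`, which generate `S'` freely over `A ⊗ A` modulo `S`. -/
def IsFreeStep (M : DGBimod A) (S S' : Submodule k M.V) : Prop :=
  ∃ (I : Type) (g : I → M.V) (deg : I → ℤ),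
    (∀ i, g i ∈ S') ∧ (∀ i, M.d (g i) ∈ S) ∧
    (∀ i p q, ∀ a ∈ A.gr p, ∀ b ∈ A.gr q, M.actR (M.actL a (g i)) b ∈ M.gr (p + q + deg i)) ∧
    S' ≤ S ⊔ (⨆ i, LinearMap.range (sandwichT M (g i))) ∧
    (∀ (u : Finset I) (c : I → A.V ⊗[k] A.V),
      (∑ i ∈ u, sandwichT M (g i) (c i)) ∈ S → ∀ i ∈ u, c i = 0)

/-- As `IsFreeStep`, with a finite generating family. -/
def IsFreeStepFin (M : DGBimod A) (S S' : Submodule k M.V) : Prop :=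
  ∃ (I : Type) (_ : Finite I) (g : I → M.V) (deg : I → ℤ),
    (∀ i, g i ∈ S') ∧ (∀ i, M.d (g i) ∈ S) ∧
    (∀ i p q, ∀ a ∈ A.gr p, ∀ b ∈ A.gr q, M.actR (M.actL a (g i)) b ∈ M.gr (p + q + deg i)) ∧
    S' ≤ S ⊔ (⨆ i, LinearMap.range (sandwichT M (g i))) ∧
    (∀ (u : Finset I) (c : I → A.V ⊗[k] A.V),
      (∑ i ∈ u, sandwichT M (g i) (c i)) ∈ S → ∀ i ∈ u, c i = 0)

/-- A filtration exhibiting `M` as a cell bimodule. -/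
def IsCellFiltration (M : DGBimod A) (Fil : ℕ → Submodule k M.V) : Prop :=
  Fil 0 = ⊥ ∧ Monotone Fil ∧ (⨆ n, Fil n) = ⊤ ∧
  (∀ n, ∀ x ∈ Fil n, M.d x ∈ Fil n) ∧
  (∀ n a, ∀ x ∈ Fil n, M.actL a x ∈ Fil n) ∧
  (∀ n a, ∀ x ∈ Fil n, M.actR x a ∈ Fil n) ∧
  (∀ n, IsFreeStep M (Fil n) (Fil (n + 1)))

/-- A cell bimodule: admits a filtration with free subquotients. -/
def IsCellBimod (M : DGBimod A) : Prop := ∃ Fil, IsCellFiltration M Fil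

/-- A finite cell bimodule: a finite filtration with finite-rank free subquotients. -/
def IsFiniteCellBimod (M : DGBimod A) : Prop :=
  ∃ Fil, (Fil 0 = ⊥ ∧ Monotone Fil ∧ (⨆ n, Fil n) = ⊤ ∧
    (∀ n, ∀ x ∈ Fil n, M.d x ∈ Fil n) ∧
    (∀ n a, ∀ x ∈ Fil n, M.actL a x ∈ Fil n) ∧
    (∀ n a, ∀ x ∈ Fil n, M.actR x a ∈ Fil n) ∧
    (∀ n, IsFreeStepFin M (Fil n) (Fil (n + 1)))) ∧ (∃ n₀, Fil n₀ = ⊤)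

/-- A (finite) cell retract: a subcomplex of a (finite) cell bimodule whose inclusion admits
a bimodule retraction. -/
def IsCellRetract (P : DGBimod A) : Prop :=
  ∃ (C : DGBimod A), IsCellBimod C ∧
    ∃ (ι : P.V →ₗ[k] C.V) (r : C.V →ₗ[k] P.V),
      IsBHom P C 0 ι ∧ IsBHom C P 0 r ∧ Function.Injective ι ∧ r.comp ι = LinearMap.id

def IsFiniteCellRetract (P : DGBimod A) : Prop :=
  ∃ (C : DGBimod A), IsFiniteCellBimod C ∧
    ∃ (ι : P.V →ₗ[k] C.V) (r : C.V →ₗ[k] P.V),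
      IsBHom P C 0 ι ∧ IsBHom C P 0 r ∧ Function.Injective ι ∧ r.comp ι = LinearMap.id

/-- `ρ : R → M` is a resolution: a quasi-isomorphism of dg bimodules from a cell retract. -/
def IsResolution (R M : DGBimod A) (ρ : R.V →ₗ[k] M.V) : Prop :=
  IsCellRetract R ∧ IsBHom R M 0 ρ ∧ IsQIsoDeg R.V M.V R.gr M.gr R.d M.d 0 ρ

/-- A bimodule is perfect if it admits a resolution by a finite cell retract. -/
def IsPerfect (M : DGBimod A) : Prop :=
  ∃ (R : DGBimod A) (ρ : R.V →ₗ[k] M.V),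
    IsFiniteCellRetract R ∧ IsBHom R M 0 ρ ∧ IsQIsoDeg R.V M.V R.gr M.gr R.d M.d 0 ρ

/-- `A` is homologically smooth: perfect as a bimodule over itself. -/
def HomSmooth (A : DGA k) : Prop := IsPerfect A.diag

/-- The homology of the dg algebra `A` in degree `n`. -/
abbrev AlgH (A : DGA k) (n : ℤ) := Hgr A.V A.gr ⊥ A.d n

/-- `A` is homologically proper: its total homology is finitely generated. -/
def HomProper (A : DGA k) : Prop :=
  (∀ n, Module.Finite k (AlgH A n)) ∧ (Set.Finite {n : ℤ | Nontrivial (AlgH A n)})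

/-- A dg bimodule is bounded if it is supported in finitely many gradings. -/
def BoundedBimod (M : DGBimod A) : Prop := ∃ u : Finset ℤ, ∀ i ∉ u, M.gr i = ⊥

/-! ### Bicomplexes and the spectral sequences of their two filtrations -/

/-- A bicomplex of `k`-modules "with relations", presented as one ambient module with a
bigrading by submodules, a horizontal differential `dh` (of bidegree `(-1,0)`), a vertical
differential `dv` (of bidegree `(0,-1)`) and a submodule `N` of relations (so that the actual
bicomplex is the quotient by `N`; take `N = ⊥` for an honest bicomplex). -/
structure RelBicx (k : Type) [CommRing k] : Type 1 where
  T : Type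
  [acg : AddCommGroup T]
  [mod : Module k T]
  gr : ℤ → ℤ → Submodule k T
  N : Submodule k T
  dh : T →ₗ[k] T
  dv : T →ₗ[k] T

attribute [instance] RelBicx.acg RelBicx.mod

namespace RelBicx

variable {k : Type} [CommRing k] (B : RelBicx k)

/-- The total differential. -/
def D : B.T →ₗ[k] B.T := B.dh + B.dv

/-- The column filtration (by the first index `p`) of the total complex, in total degree `n`. -/
def Fcol (p n : ℤ) : Submodule k B.T := ⨆ (i : ℤ) (_ : i ≤ p), B.gr i (n - i)

/-- The row filtration (by the second index `q`) of the total complex, in total degree `n`. -/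
def Frow (q n : ℤ) : Submodule k B.T := ⨆ (j : ℤ) (_ : j ≤ q), B.gr (n - j) j

/-- Approximate cycles for the spectral sequence of the filtration `F`:
elements of filtration `p` (mod `N`) whose total differential drops filtration by `r`. -/
def Zpage (F : ℤ → ℤ → Submodule k B.T) (r p n : ℤ) : Submodule k B.T :=
  (F p n ⊔ B.N) ⊓ Submodule.comap B.D (F (p - r) (n - 1) ⊔ B.N)

/-- The boundaries subobject for the `r`-th page at filtration `p`, total degree `n`. -/
def Bpage (F : ℤ → ℤ → Submodule k B.T) (r p n : ℤ) : Submodule k B.T :=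
  Submodule.map B.D (B.Zpage F (r - 1) (p + r - 1) (n + 1)) ⊔ B.Zpage F (r - 1) (p - 1) n ⊔ B.N

/-- The `r`-th page of the spectral sequence of the filtration `F`, at filtration degree `p`
and total degree `n` (the classical subquotient description `Z^r/B^r`). -/
def Epage (F : ℤ → ℤ → Submodule k B.T) (r p n : ℤ) : Type :=
  ↥(B.Zpage F r p n) ⧸
    Submodule.comap (B.Zpage F r p n).subtype (B.Bpage F r p n)

instance (F : ℤ → ℤ → Submodule k B.T) (r p n : ℤ) : AddCommGroup (B.Epage F r p n) :=
  inferInstanceAs (AddCommGroup (_ ⧸ _))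
instance (F : ℤ → ℤ → Submodule k B.T) (r p n : ℤ) : Module k (B.Epage F r p n) :=
  inferInstanceAs (Module k (_ ⧸ _))

/-- The spectral sequence `ᵛʰE` (filtration by columns; one first takes homology with respect
to the vertical differential). Indexing: `vhE r p q` is `ᵛʰE^r_{p,q}`. -/
def vhE (r p q : ℤ) : Type := B.Epage B.Fcol r p (p + q)

/-- The spectral sequence `ʰᵛE` (filtration by rows; one first takes homology with respect to
the horizontal differential), in the transposed indexing of Lipshitz–Treumann:
`hvE r p q` is `ʰᵛE^r_{p,q}`, whose filtration index is the row `q`. -/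
def hvE (r p q : ℤ) : Type := B.Epage B.Frow r q (p + q)

instance (r p q : ℤ) : AddCommGroup (B.vhE r p q) := inferInstanceAs (AddCommGroup (Epage _ _ _ _ _))
instance (r p q : ℤ) : Module k (B.vhE r p q) := inferInstanceAs (Module k (Epage _ _ _ _ _))
instance (r p q : ℤ) : AddCommGroup (B.hvE r p q) := inferInstanceAs (AddCommGroup (Epage _ _ _ _ _))
instance (r p q : ℤ) : Module k (B.hvE r p q) := inferInstanceAs (Module k (Epage _ _ _ _ _))

/-- Vanishing of the differential leaving the `r`-th page at position `(p, n)`: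
the total differential of any approximate cycle is, up to boundaries of earlier pages and
relations, an approximate cycle of deeper filtration. -/
def zeroDiff (F : ℤ → ℤ → Submodule k B.T) (r p n : ℤ) : Prop :=
  Submodule.map B.D (B.Zpage F r p n) ≤
    Submodule.map B.D (B.Zpage F (r - 1) (p - 1) n) ⊔ B.Zpage F (r - 1) (p - r - 1) (n - 1) ⊔ B.N

/-- The spectral sequence of the filtration `F` collapses at the `r₀`-th page. -/
def collapsesAt (F : ℤ → ℤ → Submodule k B.T) (r₀ : ℤ) : Prop :=
  ∀ r : ℤ, r₀ ≤ r → ∀ p n : ℤ, B.zeroDiff F r p n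

/-- The part of total degree `n` of the bicomplex. -/
def totGr (n : ℤ) : Submodule k B.T := ⨆ p : ℤ, B.gr p (n - p)

/-- The degree-`n` homology of the total complex (of the quotient by `N`). -/
def Htot (n : ℤ) : Type :=
  ↥((B.totGr n ⊔ B.N) ⊓ Submodule.comap B.D B.N) ⧸
    Submodule.comap ((B.totGr n ⊔ B.N) ⊓ Submodule.comap B.D B.N).subtype
      (Submodule.map B.D (B.totGr (n + 1) ⊔ B.N) ⊔ B.N)

instance (n : ℤ) : AddCommGroup (B.Htot n) := inferInstanceAs (AddCommGroup (_ ⧸ _))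
instance (n : ℤ) : Module k (B.Htot n) := inferInstanceAs (Module k (_ ⧸ _))

/-- The graded piece `F_p H_n / F_{p-1} H_n` of the filtration induced by `F` on the homology
of the total complex. -/
def grHtot (F : ℤ → ℤ → Submodule k B.T) (p n : ℤ) : Type :=
  ↥((F p n ⊔ B.N) ⊓ Submodule.comap B.D B.N) ⧸
    Submodule.comap ((F p n ⊔ B.N) ⊓ Submodule.comap B.D B.N).subtype
      (((F (p - 1) n ⊔ B.N) ⊓ Submodule.comap B.D B.N) ⊔
        Submodule.map B.D (B.totGr (n + 1) ⊔ B.N) ⊔ B.N)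

instance (F : ℤ → ℤ → Submodule k B.T) (p n : ℤ) : AddCommGroup (B.grHtot F p n) :=
  inferInstanceAs (AddCommGroup (_ ⧸ _))
instance (F : ℤ → ℤ → Submodule k B.T) (p n : ℤ) : Module k (B.grHtot F p n) :=
  inferInstanceAs (Module k (_ ⧸ _))

/-- The spectral sequence of the filtration `F` converges to the homology of the total
complex: for every position the pages eventually stabilize and agree with the associated
graded of the induced filtration on the homology of the total complex. -/
def convergesTo (F : ℤ → ℤ → Submodule k B.T) : Prop :=
  ∀ p n : ℤ, ∃ r₀ : ℤ, ∀ r : ℤ, r₀ ≤ r →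
    Nonempty (B.Epage F r p n ≃ₗ[k] B.grHtot F p n)

end RelBicx
/-! ### Hochschild chains, the involution `τ`, and the Hochschild–Tate bicomplex (over `𝔽₂`) -/

section Hochschild

variable {A : DGA (ZMod 2)} (R M : DGBimod A)

/-- The ambient space `R ⊗ M` of the Hochschild chain complex `HC(A, M)` (with respect to the
resolution `R` of the diagonal bimodule): `HC(A,M) = (R ⊗ M)/rel2`. -/
abbrev T2 := R.V ⊗[ZMod 2] M.V

/-- The differential `∂(r ⊗ m) = ∂r ⊗ m + r ⊗ ∂m` (char. 2). -/
def d2 : T2 R M →ₗ[ZMod 2] T2 R M :=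
  TensorProduct.map R.d LinearMap.id + TensorProduct.map LinearMap.id M.d

/-- The grading of `R ⊗ M`. -/
def gr2 (n : ℤ) : Submodule (ZMod 2) (T2 R M) :=
  Submodule.span (ZMod 2)
    {z | ∃ i j, ∃ r ∈ R.gr i, ∃ m ∈ M.gr j, i + j = n ∧ z = r ⊗ₜ[ZMod 2] m}

/-- The Hochschild relations `ra ⊗ m ∼ r ⊗ am` and `ar ⊗ m ∼ r ⊗ ma` (char. 2). -/
def rel2 : Submodule (ZMod 2) (T2 R M) :=
  Submodule.span (ZMod 2)
    ({z | ∃ r a m, z = (R.actR r a) ⊗ₜ[ZMod 2] m + r ⊗ₜ[ZMod 2] (M.actL a m)} ∪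
     {z | ∃ r a m, z = (R.actL a r) ⊗ₜ[ZMod 2] m + r ⊗ₜ[ZMod 2] (M.actR m a)})

/-- The underlying space of the Hochschild chain complex `HC(A, M)`. -/
abbrev HCQ := T2 R M ⧸ rel2 R M

/-- The Hochschild homology `HH_n(A, M)` (computed from the chosen resolution `R → A`). -/
abbrev HH (n : ℤ) := Hgr (T2 R M) (gr2 R M) (rel2 R M) (d2 R M) n

/-- The ambient space `R ⊗ (M ⊗ (R ⊗ M))` of the Hochschild chain complex of the derived
tensor product: `HC(A, M ⊗̃_A M) = (R ⊗ (M ⊠ R ⊠ M))/∼ = (R ⊗ M ⊗ R ⊗ M)/rel4`. -/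
abbrev T4 := R.V ⊗[ZMod 2] (M.V ⊗[ZMod 2] (R.V ⊗[ZMod 2] M.V))

/-- The differential of `R ⊗ M ⊗ R ⊗ M` (char. 2; no signs). -/
def d4 : T4 R M →ₗ[ZMod 2] T4 R M :=
  TensorProduct.map R.d LinearMap.id +
  TensorProduct.map LinearMap.id (TensorProduct.map M.d LinearMap.id +
    TensorProduct.map LinearMap.id (TensorProduct.map R.d LinearMap.id +
      TensorProduct.map LinearMap.id M.d))

/-- The grading of `R ⊗ M ⊗ R ⊗ M`. -/
def gr4 (n : ℤ) : Submodule (ZMod 2) (T4 R M) :=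
  Submodule.span (ZMod 2)
    {z | ∃ i₁ j₁ i₂ j₂, ∃ r ∈ R.gr i₁, ∃ m ∈ M.gr j₁, ∃ r' ∈ R.gr i₂, ∃ m' ∈ M.gr j₂,
      i₁ + j₁ + i₂ + j₂ = n ∧ z = r ⊗ₜ[ZMod 2] (m ⊗ₜ[ZMod 2] (r' ⊗ₜ[ZMod 2] m'))}

/-- The combined relations presenting `HC(A, M ⊗̃_A M)` as a quotient of `R ⊗ M ⊗ R ⊗ M`:
the two relations of the naive tensor products `M ⊠_A R ⊠_A M` and the two outer Hochschild
relations (char. 2). -/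
def rel4 : Submodule (ZMod 2) (T4 R M) :=
  Submodule.span (ZMod 2)
    ({z | ∃ r a m r' m', z = (R.actR r a) ⊗ₜ[ZMod 2] (m ⊗ₜ[ZMod 2] (r' ⊗ₜ[ZMod 2] m')) +
        r ⊗ₜ[ZMod 2] ((M.actL a m) ⊗ₜ[ZMod 2] (r' ⊗ₜ[ZMod 2] m'))} ∪
     {z | ∃ r a m r' m', z = (R.actL a r) ⊗ₜ[ZMod 2] (m ⊗ₜ[ZMod 2] (r' ⊗ₜ[ZMod 2] m')) +
        r ⊗ₜ[ZMod 2] (m ⊗ₜ[ZMod 2] (r' ⊗ₜ[ZMod 2] (M.actR m' a)))} ∪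
     {z | ∃ r a m r' m', z = r ⊗ₜ[ZMod 2] ((M.actR m a) ⊗ₜ[ZMod 2] (r' ⊗ₜ[ZMod 2] m')) +
        r ⊗ₜ[ZMod 2] (m ⊗ₜ[ZMod 2] ((R.actL a r') ⊗ₜ[ZMod 2] m'))} ∪
     {z | ∃ r a m r' m', z = r ⊗ₜ[ZMod 2] (m ⊗ₜ[ZMod 2] ((R.actR r' a) ⊗ₜ[ZMod 2] m')) +
        r ⊗ₜ[ZMod 2] (m ⊗ₜ[ZMod 2] (r' ⊗ₜ[ZMod 2] (M.actL a m')))})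


instance {A : DGA (ZMod 2)} (R M : DGBimod A) :
    HasQuotient (T4 R M) (Submodule (ZMod 2) (T4 R M)) := Submodule.hasQuotient

/-- The underlying space of the Hochschild chain complex `HC(A, M ⊗̃_A M)`. -/
abbrev HCQ4 := T4 R M ⧸ rel4 R M

/-- The Hochschild homology `HH_n(A, M ⊗̃_A M)` of the derived tensor square. -/
abbrev HH4 (n : ℤ) := Hgr (T4 R M) (gr4 R M) (rel4 R M) (d4 R M) n

/-- The involution `τ` of `R ⊗ (M ⊗ (R ⊗ M))` exchanging the two halves:
`r ⊗ (m ⊗ (r' ⊗ m')) ↦ r' ⊗ (m' ⊗ (r ⊗ m))`. -/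
def tau4 : T4 R M →ₗ[ZMod 2] T4 R M :=
  ((TensorProduct.assoc (ZMod 2) R.V M.V (R.V ⊗[ZMod 2] M.V)).toLinearMap).comp
    (((TensorProduct.comm (ZMod 2) (R.V ⊗[ZMod 2] M.V) (R.V ⊗[ZMod 2] M.V)).toLinearMap).comp
      ((TensorProduct.assoc (ZMod 2) R.V M.V (R.V ⊗[ZMod 2] M.V)).symm.toLinearMap))

/-- The Hochschild–Tate bicomplex `HC^{Tate}(A, M ⊗̃_A M)`: the `ℤ`-periodic bicomplex whose
columns are the Hochschild complex of `M ⊗̃_A M` and whose horizontal differential is `1 + τ`. -/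
def TateBicx : RelBicx (ZMod 2) where
  T := ℤ →₀ T4 R M
  gr := fun p q => Submodule.map (Finsupp.lsingle p) (gr4 R M q)
  N := ⨅ p : ℤ, Submodule.comap (Finsupp.lapply p) (rel4 R M)
  dv := Finsupp.mapRange.linearMap (d4 R M)
  dh := (Finsupp.lmapDomain (T4 R M) (ZMod 2) (fun p => p - 1)).comp
    (Finsupp.mapRange.linearMap (LinearMap.id + tau4 R M))


/-- An element of the Hochschild–Tate bicomplex concentrated in column `p`. -/
def tateSingle (p : ℤ) (x : T4 R M) : (TateBicx R M).T := Finsupp.single p x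

/-- A dg bimodule `M` is `π`-formal (with respect to the resolution `R` of the diagonal
bimodule) if the spectral sequence `ʰᵛE` of the Hochschild–Tate bicomplex of `M ⊗̃_A M`
collapses at the `E³`-page; equivalently, all the induced operations
`d^{2i} : HH_k(A,M) → HH_{k-i}(A,M)`, `i ≥ 2`, vanish. -/
def PiFormalBimod : Prop := (TateBicx R M).collapsesAt (TateBicx R M).Frow 3

/-- A dg algebra is `π`-formal if every dg bimodule over it is `π`-formal. -/
def PiFormalAlg (R : DGBimod A) : Prop := ∀ M : DGBimod A, PiFormalBimod R M

end Hochschild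

/-! The square `x ↦ x ⊗ x` is additive modulo `1 + τ`, because its polarization `x ⊗ y + y ⊗ x`
lies in the image of `1 + τ`. It therefore suffices to see that it kills each generator `u + v` of
the Hochschild relations, that is, `u ⊗ u ∼ v ⊗ v`. Reading a four-fold tensor as a cyclic word,
this means moving two copies of the algebra element across the adjacent tensor signs, one at a
time:
`ra ⊗ m ⊗ ra ⊗ m ∼ r ⊗ am ⊗ ra ⊗ m ∼ r ⊗ am ⊗ r ⊗ am`, and
`ar ⊗ m ⊗ ar ⊗ m ∼ r ⊗ m ⊗ ar ⊗ ma ∼ r ⊗ ma ⊗ r ⊗ ma`. -/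

section TensorSquare

variable (k V : Type*) [CommRing k] [AddCommGroup V] [Module k V]

/-- The submodule of norms `z + σ z` of `V ⊗ V`, where `σ` is the swap of the two factors. -/
def swapNorms : Submodule k (V ⊗[k] V) :=
  LinearMap.range (LinearMap.id + (TensorProduct.comm k V V).toLinearMap)

variable {k V}

lemma tmul_add_tmul_mem_swapNorms (x y : V) :
    x ⊗ₜ[k] y + y ⊗ₜ[k] x ∈ swapNorms k V :=
  ⟨x ⊗ₜ y, rfl⟩

variable (k V)

/-- The tensor square `x ↦ x ⊗ x`, with values in `V ⊗ V` modulo the norms of the swap. In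
characteristic two it is linear along the Frobenius endomorphism. -/
def tensorSq [ExpChar k 2] : V →ₛₗ[frobenius k 2] (V ⊗[k] V) ⧸ swapNorms k V where
  toFun x := (swapNorms k V).mkQ (x ⊗ₜ x)
  map_add' x y := by
    rw [← map_add, ← sub_eq_zero, ← map_sub, Submodule.mkQ_apply, Submodule.Quotient.mk_eq_zero]
    have polarization : (x + y) ⊗ₜ[k] (x + y) - (x ⊗ₜ x + y ⊗ₜ y) = x ⊗ₜ y + y ⊗ₜ x := by
      simp only [TensorProduct.add_tmul, TensorProduct.tmul_add]
      abel
    exact polarization ▸ tmul_add_tmul_mem_swapNorms x y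
  map_smul' c x := by
    rw [TensorProduct.smul_tmul_smul, map_smul, frobenius_def, sq]

end TensorSquare

section HochschildSquare

variable {A : DGA (ZMod 2)} (R M : DGBimod A)

/-- The relations that cut `R ⊗ M ⊗ R ⊗ M` down to the Hochschild chains of `M ⊗̃_A M` modulo the
image of `1 + τ`. -/
def rel4Tau : Submodule (ZMod 2) (T4 R M) :=
  LinearMap.range (LinearMap.id + tau4 R M) ⊔ rel4 R M

lemma swapNorms_le_comap_assoc_rel4Tau :
    swapNorms (ZMod 2) (T2 R M) ≤
      (rel4Tau R M).comap
        (TensorProduct.assoc (ZMod 2) R.V M.V (R.V ⊗[ZMod 2] M.V)).toLinearMap := by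
  rintro _ ⟨z, rfl⟩
  refine Submodule.mem_sup_left ⟨TensorProduct.assoc (ZMod 2) R.V M.V _ z, ?_⟩
  simp [tau4]

/-- The square of an element of `R ⊗ M`, as a Hochschild chain of `M ⊗̃_A M` modulo `1 + τ`. -/
def preHochschildSq : T2 R M →ₛₗ[frobenius (ZMod 2) 2] T4 R M ⧸ rel4Tau R M :=
  (Submodule.mapQ _ _ _ (swapNorms_le_comap_assoc_rel4Tau R M)).comp (tensorSq (ZMod 2) (T2 R M))

variable {R M}

lemma preHochschildSq_tmul (r : R.V) (m : M.V) :
    preHochschildSq R M (r ⊗ₜ m) = (rel4Tau R M).mkQ (r ⊗ₜ (m ⊗ₜ (r ⊗ₜ m))) :=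
  rfl

lemma mkQ_rel4Tau_eq_of_add_mem_rel4 {x y : T4 R M} (h : x + y ∈ rel4 R M) :
    (rel4Tau R M).mkQ x = (rel4Tau R M).mkQ y := by
  rw [← ZModModule.sub_eq_add] at h
  exact (Submodule.Quotient.eq _).2 (Submodule.mem_sup_right h)

lemma preHochschildSq_actR_tmul (r : R.V) (a : A.V) (m : M.V) :
    preHochschildSq R M (R.actR r a ⊗ₜ m) = preHochschildSq R M (r ⊗ₜ M.actL a m) :=
  calc (rel4Tau R M).mkQ (R.actR r a ⊗ₜ (m ⊗ₜ (R.actR r a ⊗ₜ m)))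
    _ = (rel4Tau R M).mkQ (r ⊗ₜ (M.actL a m ⊗ₜ (R.actR r a ⊗ₜ m))) :=
      mkQ_rel4Tau_eq_of_add_mem_rel4 <|
        Submodule.subset_span (.inl (.inl (.inl ⟨r, a, m, R.actR r a, m, rfl⟩)))
    _ = (rel4Tau R M).mkQ (r ⊗ₜ (M.actL a m ⊗ₜ (r ⊗ₜ M.actL a m))) :=
      mkQ_rel4Tau_eq_of_add_mem_rel4 <|
        Submodule.subset_span (.inr ⟨r, a, M.actL a m, r, m, rfl⟩)

lemma preHochschildSq_actL_tmul (r : R.V) (a : A.V) (m : M.V) :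
    preHochschildSq R M (R.actL a r ⊗ₜ m) = preHochschildSq R M (r ⊗ₜ M.actR m a) :=
  calc (rel4Tau R M).mkQ (R.actL a r ⊗ₜ (m ⊗ₜ (R.actL a r ⊗ₜ m)))
    _ = (rel4Tau R M).mkQ (r ⊗ₜ (m ⊗ₜ (R.actL a r ⊗ₜ M.actR m a))) :=
      mkQ_rel4Tau_eq_of_add_mem_rel4 <|
        Submodule.subset_span (.inl (.inl (.inr ⟨r, a, m, R.actL a r, m, rfl⟩)))
    _ = (rel4Tau R M).mkQ (r ⊗ₜ (M.actR m a ⊗ₜ (r ⊗ₜ M.actR m a))) :=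
      (mkQ_rel4Tau_eq_of_add_mem_rel4 <|
        Submodule.subset_span (.inl (.inr ⟨r, a, m, r, M.actR m a, rfl⟩))).symm

variable (R M)

lemma rel2_le_ker_preHochschildSq : rel2 R M ≤ LinearMap.ker (preHochschildSq R M) := by
  refine Submodule.span_le.2 ?_
  rintro _ (⟨r, a, m, rfl⟩ | ⟨r, a, m, rfl⟩) <;>
    rw [SetLike.mem_coe, LinearMap.mem_ker, map_add]
  · rw [preHochschildSq_actR_tmul, ZModModule.add_self]
  · rw [preHochschildSq_actL_tmul, ZModModule.add_self]

/-- The squaring operation `ξ ↦ ξ^{⊗2}` from the Hochschild chains of `M` to the Hochschild chains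
of `M ⊗̃_A M` modulo the image of `1 + τ`. -/
def hochschildSq : HCQ R M →ₛₗ[frobenius (ZMod 2) 2] T4 R M ⧸ rel4Tau R M :=
  (rel2 R M).liftQ (preHochschildSq R M) (rel2_le_ker_preHochschildSq R M)

variable {R M}

lemma hochschildSq_mkQ_sum {L : Type*} (s : Finset L) (c : L → ZMod 2) (r : L → R.V)
    (m : L → M.V) :
    hochschildSq R M ((rel2 R M).mkQ (∑ l ∈ s, c l • (r l ⊗ₜ m l))) =
      (rel4Tau R M).mkQ (∑ l ∈ s, (c l * c l) • (r l ⊗ₜ (m l ⊗ₜ (r l ⊗ₜ m l)))) := by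
  rw [hochschildSq, Submodule.mkQ_apply, Submodule.liftQ_apply]
  simp only [map_sum, map_smulₛₗ, preHochschildSq_tmul, frobenius_def, sq, RingHom.id_apply]

theorem sq_well_defined_general {L L' : Type*} [Fintype L] [Fintype L']
    (c : L → ZMod 2) (r : L → R.V) (m : L → M.V)
    (c' : L' → ZMod 2) (r' : L' → R.V) (m' : L' → M.V)
    (heq : (∑ l, c l • (r l ⊗ₜ[ZMod 2] m l)) - (∑ l, c' l • (r' l ⊗ₜ[ZMod 2] m' l))
      ∈ rel2 R M) :
    (∑ l, (c l * c l) • (r l ⊗ₜ[ZMod 2] (m l ⊗ₜ[ZMod 2] (r l ⊗ₜ[ZMod 2] m l)))) -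
      (∑ l, (c' l * c' l) • (r' l ⊗ₜ[ZMod 2] (m' l ⊗ₜ[ZMod 2] (r' l ⊗ₜ[ZMod 2] m' l)))) ∈
      LinearMap.range (LinearMap.id + tau4 R M) ⊔ rel4 R M := by
  refine (Submodule.Quotient.eq (rel4Tau R M)).1 ?_
  simp only [← Submodule.mkQ_apply, ← hochschildSq_mkQ_sum]
  exact congrArg (hochschildSq R M) ((Submodule.Quotient.eq (rel2 R M)).2 heq)

end HochschildSquare

/-- **Well-definedness of the squaring operation.** For `ξ ∈ HC_n(A,M)` written as a linear
combination of pure tensors `ξ = ∑ c_ℓ r_ℓ ⊗ m_ℓ`, the element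
`ξ^{⊗2} = ∑ c_ℓ² r_ℓ ⊗ (m_ℓ ⊗ r_ℓ ⊗ m_ℓ)` of `HC_{2n}(A, M ⊗̃_A M)` is well defined modulo
the image of `1 + τ`: it does not depend on the chosen presentation of `ξ`. -/
theorem sq_well_defined
    (A : DGA (ZMod 2)) (R : DGBimod A) (ρ : R.V →ₗ[ZMod 2] A.diag.V)
    (hres : IsResolution R A.diag ρ) (M : DGBimod A) (n : ℤ)
    (L L' : Type) [Fintype L] [Fintype L']
    (c : L → ZMod 2) (r : L → R.V) (m : L → M.V)
    (c' : L' → ZMod 2) (r' : L' → R.V) (m' : L' → M.V)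
    (hdeg : ∀ l, ∃ i j, r l ∈ R.gr i ∧ m l ∈ M.gr j ∧ i + j = n)
    (hdeg' : ∀ l, ∃ i j, r' l ∈ R.gr i ∧ m' l ∈ M.gr j ∧ i + j = n)
    (heq : (∑ l, c l • (r l ⊗ₜ[ZMod 2] m l)) - (∑ l, c' l • (r' l ⊗ₜ[ZMod 2] m' l))
      ∈ rel2 R M) :
    (∑ l, (c l * c l) • (r l ⊗ₜ[ZMod 2] (m l ⊗ₜ[ZMod 2] (r l ⊗ₜ[ZMod 2] m l)))) -
      (∑ l, (c' l * c' l) • (r' l ⊗ₜ[ZMod 2] (m' l ⊗ₜ[ZMod 2] (r' l ⊗ₜ[ZMod 2] m' l)))) ∈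
      LinearMap.range (LinearMap.id + tau4 R M) ⊔ rel4 R M := by
  exact sq_well_defined_general c r m c' r' m' heq

end LT
end
end

section
/- Let A be a dg algebra over F₂ and M a dg (A,A)-bimodule. For each k, the assignment ξ ↦ ξ^{⊗2} + Im(1+τ) is an F₂-linear isomorphism from HC_k(M) onto ^{hv}E¹_{p,2k} = (ker(1+τ)/Im(1+τ)) in degree 2k, for every p. Moreover ^{hv}E¹_{p,2k+1} = 0 for all p and k. -/
noncomputable section
open TensorProduct

namespace LT

variable {k : Type} [CommRing k]

variable {A : DGA k}

variable {A : DGA k}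

/-- The degree-`n` part of the Hochschild chain complex `HC(A,M)`. -/
abbrev HCdeg {A : DGA (ZMod 2)} (R M : DGBimod A) (n : ℤ) :=
  ↥(gr2 R M n ⊔ rel2 R M) ⧸
    Submodule.comap (gr2 R M n ⊔ rel2 R M).subtype (rel2 R M)

/-!
For a vector space `X` over `𝔽₂`, the Tate cohomology of the swap on `X ⊗ X` is `X` itself, through
`x ↦ x ⊗ x`: in a basis, a symmetric tensor is determined modulo `1 + τ` by its diagonal
coefficients. If `R` has a bimodule basis `(g_i)`, then `a g_i b ⊗ m ↦ (b m a)_i` identifies `HC(M)`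
with `X = ⨁ᵢ M` and `HC(M ⊗̃_A M)` with `X ⊗ X`, compatibly with `τ` and, modulo `1 + τ`, with
squares. This property passes to retracts, hence holds for every cell retract `R`; squares of
degree-`n` elements have degree `2n`, and the off-diagonal part of the square of an inhomogeneous
element lies in the image of `1 + τ`, so the odd part vanishes. Finally the first page of the row
filtration of the Hochschild–Tate bicomplex is this Tate cohomology.
-/

section Frobenius

variable {V W V' W' X : Type*}
  [AddCommGroup V] [Module (ZMod 2) V] [AddCommGroup W] [Module (ZMod 2) W]
  [AddCommGroup V'] [Module (ZMod 2) V'] [AddCommGroup W'] [Module (ZMod 2) W']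
  [AddCommGroup X] [Module (ZMod 2) X]

/-- The map `1 + τ`, for `τ` an involution in characteristic two. -/
abbrev onePlus (τ : W →ₗ[ZMod 2] W) : W →ₗ[ZMod 2] W := LinearMap.id + τ

/-- For a bilinear map `μ` and an involution `τ` such that `τ (μ v w) = μ w v`, the assertion that
`v ↦ μ v v` induces a bijection from `V / S` onto the Tate cohomology `ker (1 + τ) / Im (1 + τ)`
of `W / N`. Injectivity is phrased as a description of the kernel. -/
structure IsFrobeniusIso (μ : V →ₗ[ZMod 2] V →ₗ[ZMod 2] W) (τ : W →ₗ[ZMod 2] W)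
    (S : Submodule (ZMod 2) V) (N : Submodule (ZMod 2) W) : Prop where
  apply_self_mem_iff : ∀ v, μ v v ∈ N ⊔ LinearMap.range (onePlus τ) ↔ v ∈ S
  exists_sub_apply_self_mem : ∀ x, onePlus τ x ∈ N →
    ∃ v, x - μ v v ∈ N ⊔ LinearMap.range (onePlus τ)

lemma add_apply_self_sub_mem_range_onePlus {μ : V →ₗ[ZMod 2] V →ₗ[ZMod 2] W}
    {τ : W →ₗ[ZMod 2] W} (hμ : ∀ v w, τ (μ v w) = μ w v) (v w : V) :
    μ (v + w) (v + w) - (μ v v + μ w w) ∈ LinearMap.range (onePlus τ) :=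
  ⟨μ v w, by simp only [LinearMap.add_apply, LinearMap.id_apply, map_add, hμ]; abel⟩

section TensorSquare

variable {B : Type*} (b : Module.Basis B (ZMod 2) X)

lemma repr_tensorProduct_comm (y : X ⊗[ZMod 2] X) (i j : B) :
    (b.tensorProduct b).repr (TensorProduct.comm (ZMod 2) X X y) (i, j) =
      (b.tensorProduct b).repr y (j, i) := by
  induction y with
  | zero => simp
  | tmul x y => simp [mul_comm]
  | add x y hx hy => simp only [map_add, Finsupp.add_apply, hx, hy]

lemma repr_tmul_self_diag (u : X) (i : B) :
    (b.tensorProduct b).repr (u ⊗ₜ u) (i, i) = b.repr u i := by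
  have idem : ∀ c : ZMod 2, c * c = c := by decide
  simp [idem]

lemma repr_onePlus_comm_diag (v : X ⊗[ZMod 2] X) (i : B) :
    (b.tensorProduct b).repr (onePlus (TensorProduct.comm (ZMod 2) X X).toLinearMap v) (i, i) =
      0 := by
  simp [repr_tensorProduct_comm, ZModModule.add_self]

lemma mem_range_onePlus_comm_of_repr_diag_eq_zero {y : X ⊗[ZMod 2] X}
    (hsymm : TensorProduct.comm (ZMod 2) X X y = y)
    (hdiag : ∀ i, (b.tensorProduct b).repr y (i, i) = 0) :
    y ∈ LinearMap.range (onePlus (TensorProduct.comm (ZMod 2) X X).toLinearMap) := by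
  classical
  obtain ⟨_, _⟩ := exists_wellFoundedLT B
  let upper : X ⊗[ZMod 2] X := (b.tensorProduct b).repr.symm
    (((b.tensorProduct b).repr y).filter fun p => p.1 < p.2)
  refine ⟨upper, (b.tensorProduct b).ext_elem ?_⟩
  rintro ⟨i, j⟩
  simp only [LinearMap.add_apply, LinearMap.id_apply, LinearEquiv.coe_coe, map_add,
    Finsupp.add_apply, repr_tensorProduct_comm, upper, LinearEquiv.apply_symm_apply,
    Finsupp.filter_apply]
  rcases lt_trichotomy i j with hij | rfl | hij
  · simp [hij, hij.not_gt]
  · simp [hdiag]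
  · simp [hij, hij.not_gt, ← repr_tensorProduct_comm b y i j, hsymm]

end TensorSquare

theorem isFrobeniusIso_mk_comm :
    IsFrobeniusIso (TensorProduct.mk (ZMod 2) X X) (TensorProduct.comm (ZMod 2) X X).toLinearMap
      ⊥ ⊥ := by
  classical
  obtain ⟨B, ⟨b⟩⟩ := Module.Basis.exists_basis (ZMod 2) X
  refine ⟨fun u => ?_, fun y hy => ?_⟩
  · rw [bot_sup_eq, Submodule.mem_bot]
    refine ⟨fun ⟨v, hv⟩ => b.ext_elem fun i => ?_, fun hu => by simp [hu]⟩
    rw [← repr_tmul_self_diag, ← TensorProduct.mk_apply, ← hv, repr_onePlus_comm_diag]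
    simp
  · let diag : B →₀ ZMod 2 := ((b.tensorProduct b).repr y).comapDomain (fun i => (i, i))
      fun i _ j _ hij => (Prod.mk.inj hij).1
    let u : X := b.repr.symm diag
    have hsymm : TensorProduct.comm (ZMod 2) X X y = y := by
      rw [Submodule.mem_bot, LinearMap.add_apply, add_eq_zero_iff_neg_eq,
        ZModModule.neg_eq_self] at hy
      exact hy.symm
    refine ⟨u, ?_⟩
    rw [bot_sup_eq]
    refine mem_range_onePlus_comm_of_repr_diag_eq_zero b (by simp [hsymm]) fun i => ?_
    rw [map_sub, Finsupp.sub_apply, TensorProduct.mk_apply, repr_tmul_self_diag,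
      LinearEquiv.apply_symm_apply]
    exact sub_self _

/-- A map of pairs `(V, W)` compatible with the submodules, the involutions, and, modulo
`N' ⊔ Im (1 + τ')`, with the squares `v ↦ μ v v`. -/
structure FrobeniusHom (μ : V →ₗ[ZMod 2] V →ₗ[ZMod 2] W) (τ : W →ₗ[ZMod 2] W)
    (S : Submodule (ZMod 2) V) (N : Submodule (ZMod 2) W)
    (μ' : V' →ₗ[ZMod 2] V' →ₗ[ZMod 2] W') (τ' : W' →ₗ[ZMod 2] W')
    (S' : Submodule (ZMod 2) V') (N' : Submodule (ZMod 2) W')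
    (f : V →ₗ[ZMod 2] V') (F : W →ₗ[ZMod 2] W') : Prop where
  map_le : S ≤ S'.comap f
  map_rel_le : N ≤ N'.comap F
  map_invol : ∀ x, F (τ x) = τ' (F x)
  map_apply_self : ∀ v, F (μ v v) - μ' (f v) (f v) ∈ N' ⊔ LinearMap.range (onePlus τ')

variable {μ : V →ₗ[ZMod 2] V →ₗ[ZMod 2] W} {τ : W →ₗ[ZMod 2] W}
  {S : Submodule (ZMod 2) V} {N : Submodule (ZMod 2) W}
  {μ' : V' →ₗ[ZMod 2] V' →ₗ[ZMod 2] W'} {τ' : W' →ₗ[ZMod 2] W'}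
  {S' : Submodule (ZMod 2) V'} {N' : Submodule (ZMod 2) W'}
  {f : V →ₗ[ZMod 2] V'} {F : W →ₗ[ZMod 2] W'} {g : V' →ₗ[ZMod 2] V} {G : W' →ₗ[ZMod 2] W}

namespace FrobeniusHom

lemma map_onePlus (h : FrobeniusHom μ τ S N μ' τ' S' N' f F) (x : W) :
    F (onePlus τ x) = onePlus τ' (F x) := by
  simp [h.map_invol]

lemma map_mem_sup_range_onePlus (h : FrobeniusHom μ τ S N μ' τ' S' N' f F) {x : W}
    (hx : x ∈ N ⊔ LinearMap.range (onePlus τ)) : F x ∈ N' ⊔ LinearMap.range (onePlus τ') := by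
  obtain ⟨y, hy, _, ⟨z, rfl⟩, rfl⟩ := Submodule.mem_sup.1 hx
  rw [map_add, h.map_onePlus]
  exact Submodule.add_mem_sup (h.map_rel_le hy) ⟨F z, rfl⟩

lemma map_apply_self_mem_iff (h : FrobeniusHom μ τ S N μ' τ' S' N' f F) (v : V) :
    F (μ v v) ∈ N' ⊔ LinearMap.range (onePlus τ') ↔
      μ' (f v) (f v) ∈ N' ⊔ LinearMap.range (onePlus τ') :=
  ⟨fun hv => (Submodule.sub_mem_iff_right _ hv).1 (h.map_apply_self v),
    fun hv => (Submodule.sub_mem_iff_left _ hv).1 (h.map_apply_self v)⟩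

end FrobeniusHom

theorem IsFrobeniusIso.of_retract (hiso : IsFrobeniusIso μ' τ' S' N')
    (hf : FrobeniusHom μ τ S N μ' τ' S' N' f F) (hg : FrobeniusHom μ' τ' S' N' μ τ S N g G)
    (hgf : ∀ v, g (f v) - v ∈ S) (hGF : ∀ x, G (F x) - x ∈ N) :
    IsFrobeniusIso μ τ S N := by
  have hGF' (x : W) : G (F x) - x ∈ N ⊔ LinearMap.range (onePlus τ) :=
    Submodule.mem_sup_left (hGF x)
  refine ⟨fun v => ?_, fun x hx => ?_⟩
  · have hmem : μ v v ∈ N ⊔ LinearMap.range (onePlus τ) ↔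
        F (μ v v) ∈ N' ⊔ LinearMap.range (onePlus τ') :=
      ⟨hf.map_mem_sup_range_onePlus, fun h =>
        (Submodule.sub_mem_iff_right _ (hg.map_mem_sup_range_onePlus h)).1 (hGF' _)⟩
    rw [hmem, hf.map_apply_self_mem_iff, hiso.apply_self_mem_iff]
    refine ⟨fun hfv => ?_, fun hv => hf.map_le hv⟩
    have hgfv : g (f v) ∈ S := hg.map_le hfv
    exact (Submodule.sub_mem_iff_right _ hgfv).1 (hgf v)
  · have hFx : onePlus τ' (F x) ∈ N' := by
      rw [← hf.map_onePlus]
      exact hf.map_rel_le hx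
    obtain ⟨u, hu⟩ := hiso.exists_sub_apply_self_mem _ hFx
    refine ⟨g u, ?_⟩
    convert sub_mem (add_mem (hg.map_mem_sup_range_onePlus hu) (hg.map_apply_self u)) (hGF' x)
      using 1
    rw [map_sub]
    abel

end Frobenius

section Grading

open DirectSum

variable {k ι V W : Type*} [CommRing k] [AddCommGroup V] [Module k V] [AddCommGroup W] [Module k W]
  [DecidableEq ι] {gr : ι → Submodule k V} {gr' : ι → Submodule k W}

/-- The coaction `V → V ⊗ k[ι]` of a graded module, recording the homogeneous components of a
vector; here `V ⊗ k[ι]` is the module `ι →₀ V`. -/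
def gradedCoaction (h : IsInternal gr) : V →ₗ[k] ι →₀ V :=
  toModule k ι (ι →₀ V) (fun i => Finsupp.lsingle i ∘ₗ (gr i).subtype) ∘ₗ
    (LinearEquiv.ofBijective (coeLinearMap gr) h).symm.toLinearMap

lemma gradedCoaction_of_mem (h : IsInternal gr) {i : ι} {v : V} (hv : v ∈ gr i) :
    gradedCoaction h v = Finsupp.single i v := by
  have hsymm : (LinearEquiv.ofBijective (coeLinearMap gr) h).symm v =
      lof k ι (fun i => gr i) i ⟨v, hv⟩ := by
    rw [LinearEquiv.symm_apply_eq]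
    exact (coeLinearMap_lof gr i ⟨v, hv⟩).symm
  simp [gradedCoaction, hsymm]

theorem isInternal_of_coaction (δ : V →ₗ[k] ι →₀ V)
    (hδ : ∀ i, ∀ v ∈ gr i, δ v = Finsupp.single i v) (htop : ⨆ i, gr i = ⊤) :
    IsInternal gr := by
  have component_eq (i : ι) (x : ⨁ i, gr i) : δ (coeLinearMap gr x) i = x i := by
    induction x using DirectSum.induction_on with
    | zero => simp
    | of j v =>
      rw [coeLinearMap_of, hδ j v v.2]
      rcases eq_or_ne j i with rfl | hji
      · rw [Finsupp.single_eq_same, of_eq_same]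
      · rw [Finsupp.single_eq_of_ne hji.symm, of_eq_of_ne _ _ _ hji.symm, ZeroMemClass.coe_zero]
    | add x y hx hy =>
      rw [map_add, map_add, Finsupp.add_apply, hx, hy, DirectSum.add_apply, Submodule.coe_add]
  constructor
  · refine (injective_iff_map_eq_zero (coeLinearMap gr)).2 fun x hx => DFinsupp.ext fun i => ?_
    simpa [hx] using (component_eq i x).symm
  · refine LinearMap.range_eq_top.1 (?_ : LinearMap.range (coeLinearMap gr) = ⊤)
    rw [range_coeLinearMap, htop]

lemma homogeneous_induction (h : IsInternal gr) {motive : V → Prop}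
    (mem : ∀ i, ∀ v ∈ gr i, motive v) (zero : motive 0)
    (add : ∀ v w, motive v → motive w → motive (v + w)) (v : V) : motive v :=
  Submodule.iSup_induction gr (motive := motive) (h.submodule_iSup_eq_top ▸ Submodule.mem_top)
    mem zero add

lemma mem_of_forall_homogeneous (h : IsInternal gr) {S : Submodule k W} {f : V → W}
    (map_add : ∀ v w, f (v + w) = f v + f w) (mem : ∀ i, ∀ v ∈ gr i, f v ∈ S) (v : V) :
    f v ∈ S := by
  induction v using homogeneous_induction h with
  | mem i v hv => exact mem i v hv
  | zero =>
    have f_zero : f 0 = 0 := _root_.map_zero (AddMonoidHom.mk' f map_add)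
    exact f_zero ▸ zero_mem S
  | add v w hv hw => exact map_add v w ▸ add_mem hv hw

/-- The projection of a graded module onto its component of degree `i`. -/
def gradedProj (h : IsInternal gr) (i : ι) : V →ₗ[k] V :=
  Finsupp.lapply i ∘ₗ gradedCoaction h

lemma gradedProj_of_mem (h : IsInternal gr) {i : ι} {v : V} (hv : v ∈ gr i) :
    gradedProj h i v = v := by
  simp [gradedProj, gradedCoaction_of_mem h hv]

lemma gradedProj_of_mem_of_ne (h : IsInternal gr) {i j : ι} {v : V} (hv : v ∈ gr j)
    (hij : i ≠ j) : gradedProj h i v = 0 := by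
  simp [gradedProj, gradedCoaction_of_mem h hv, Finsupp.single_eq_of_ne hij]

lemma gradedProj_eq_ite_of_mem (h : IsInternal gr) {i j : ι} {v : V} (hv : v ∈ gr j) :
    gradedProj h i v = if i = j then v else 0 := by
  split_ifs with hij
  · exact gradedProj_of_mem h (hij ▸ hv)
  · exact gradedProj_of_mem_of_ne h hv hij

lemma gradedProj_mem (h : IsInternal gr) (i : ι) (v : V) : gradedProj h i v ∈ gr i := by
  induction v using homogeneous_induction h with
  | zero => simp
  | add v w hv hw => rw [map_add]; exact add_mem hv hw
  | mem j v hv =>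
    rcases eq_or_ne i j with rfl | hij
    · rwa [gradedProj_of_mem h hv]
    · simp [gradedProj_of_mem_of_ne h hv hij]

lemma gradedProj_map (h : IsInternal gr) (h' : IsInternal gr') {f : V →ₗ[k] W}
    (hf : ∀ i, ∀ v ∈ gr i, f v ∈ gr' i) (i : ι) (v : V) :
    gradedProj h' i (f v) = f (gradedProj h i v) := by
  induction v using homogeneous_induction h with
  | zero => simp
  | add v w hv hw => simp only [map_add, hv, hw]
  | mem j v hv => simp only [gradedProj_eq_ite_of_mem h hv, gradedProj_eq_ite_of_mem h' (hf j v hv),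
      apply_ite f, map_zero]

lemma gradedProj_mem_of_le_iSup_inf (h : IsInternal gr) {N : Submodule k V}
    (hN : N ≤ ⨆ j, N ⊓ gr j) (i : ι) {v : V} (hv : v ∈ N) : gradedProj h i v ∈ N := by
  refine Submodule.iSup_induction _ (motive := fun v => gradedProj h i v ∈ N) (hN hv)
    (fun j v hv => ?_) (by simp) fun v w hv hw => by rw [map_add]; exact add_mem hv hw
  rw [gradedProj_eq_ite_of_mem h hv.2]
  split_ifs
  exacts [hv.1, zero_mem N]

end Grading

section TensorGrading

open DirectSum

variable {k ι V W : Type*} [CommRing k] [AddCommGroup V] [Module k V] [AddCommGroup W] [Module k W]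
  [Add ι] {gr : ι → Submodule k V} {gr' : ι → Submodule k W}

/-- The total grading of the tensor product of two graded modules. -/
def tensorGrading (gr : ι → Submodule k V) (gr' : ι → Submodule k W) (n : ι) :
    Submodule k (V ⊗[k] W) :=
  Submodule.span k {z | ∃ i j, ∃ v ∈ gr i, ∃ w ∈ gr' j, i + j = n ∧ z = v ⊗ₜ[k] w}

lemma tmul_mem_tensorGrading {i j : ι} {v : V} {w : W} (hv : v ∈ gr i) (hw : w ∈ gr' j) :
    v ⊗ₜ w ∈ tensorGrading gr gr' (i + j) :=
  Submodule.subset_span ⟨i, j, v, hv, w, hw, rfl, rfl⟩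

theorem isInternal_tensorGrading [DecidableEq ι] (h : IsInternal gr) (h' : IsInternal gr') :
    IsInternal (tensorGrading gr gr') := by
  refine isInternal_of_coaction
    (Finsupp.lmapDomain (V ⊗[k] W) k (fun p : ι × ι => p.1 + p.2) ∘ₗ
      (finsuppTensorFinsupp k k V W ι ι).toLinearMap ∘ₗ
      TensorProduct.map (gradedCoaction h) (gradedCoaction h')) (fun n x hx => ?_) ?_
  · refine LinearMap.eqOn_span' (g := Finsupp.lsingle n) ?_ hx
    rintro _ ⟨i, j, v, hv, w, hw, rfl, rfl⟩
    simp [gradedCoaction_of_mem h hv, gradedCoaction_of_mem h' hw]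
  · refine Submodule.eq_top_iff'.2 fun x => ?_
    induction x with
    | zero => exact zero_mem _
    | add x y hx hy => exact add_mem hx hy
    | tmul v w =>
      refine mem_of_forall_homogeneous h (f := (· ⊗ₜ w)) (add_tmul · · w) (fun i v hv => ?_) v
      refine mem_of_forall_homogeneous h' (tmul_add v) (fun j w hw => ?_) w
      exact Submodule.mem_iSup_of_mem (i + j) (tmul_mem_tensorGrading hv hw)

end TensorGrading

section HochschildSquare

open DirectSum

variable {A : DGA (ZMod 2)} (R M : DGBimod A)

/-- The canonical pairing `(r ⊗ m, r' ⊗ m') ↦ r ⊗ (m ⊗ (r' ⊗ m'))`, whose diagonal is the square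
`ξ ↦ ξ^{⊗2}`. -/
def pairing : T2 R M →ₗ[ZMod 2] T2 R M →ₗ[ZMod 2] T4 R M :=
  (TensorProduct.mk (ZMod 2) (T2 R M) (T2 R M)).compr₂
    (TensorProduct.assoc (ZMod 2) R.V M.V (T2 R M)).toLinearMap

variable {R M}

@[simp]
lemma pairing_tmul (r : R.V) (m : M.V) (y : T2 R M) :
    pairing R M (r ⊗ₜ m) y = r ⊗ₜ (m ⊗ₜ y) := rfl

lemma pairing_induction {motive : T4 R M → Prop} (zero : motive 0)
    (add : ∀ x y, motive x → motive y → motive (x + y))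
    (pairing : ∀ v w, motive (pairing R M v w)) (x : T4 R M) : motive x := by
  obtain ⟨z, rfl⟩ := (TensorProduct.assoc (ZMod 2) R.V M.V (T2 R M)).surjective x
  induction z with
  | zero => simpa using zero
  | tmul v w => exact pairing v w
  | add x y hx hy => rw [map_add]; exact add _ _ hx hy

@[simp]
lemma tau4_pairing (v w : T2 R M) : tau4 R M (pairing R M v w) = pairing R M w v := by
  simp [tau4, pairing]

variable (R M) in
lemma isInternal_gr2 : IsInternal (gr2 R M) :=
  isInternal_tensorGrading R.internal M.internal

lemma pairing_mem_gr4 {i j : ℤ} {v w : T2 R M} (hv : v ∈ gr2 R M i) (hw : w ∈ gr2 R M j) :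
    pairing R M v w ∈ gr4 R M (i + j) := by
  induction hv, hw using Submodule.span_induction₂ with
  | mem_mem v w hv hw =>
    obtain ⟨i₁, j₁, r, hr, m, hm, rfl, rfl⟩ := hv
    obtain ⟨i₂, j₂, r', hr', m', hm', rfl, rfl⟩ := hw
    exact Submodule.subset_span
      ⟨i₁, j₁, i₂, j₂, r, hr, m, hm, r', hr', m', hm', add_assoc _ _ _, rfl⟩
  | zero_left => simp
  | zero_right => simp
  | add_left x y z _ _ _ hx hy => rw [map_add]; exact add_mem hx hy
  | add_right x y z _ _ _ hy hz => rw [map_add]; exact add_mem hy hz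
  | smul_left c x y _ _ h => rw [map_smul]; exact Submodule.smul_mem _ c h
  | smul_right c x y _ _ h => rw [map_smul]; exact Submodule.smul_mem _ c h

variable (R M) in
lemma gr4_eq_map_tensorGrading (n : ℤ) :
    gr4 R M n = (tensorGrading (gr2 R M) (gr2 R M) n).map
      (TensorProduct.assoc (ZMod 2) R.V M.V (T2 R M)).toLinearMap := by
  refine le_antisymm (Submodule.span_le.2 ?_) ((Submodule.map_span_le _ _ _).2 ?_)
  · rintro _ ⟨i₁, j₁, i₂, j₂, r, hr, m, hm, r', hr', m', hm', rfl, rfl⟩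
    refine ⟨(r ⊗ₜ m) ⊗ₜ (r' ⊗ₜ m'), ?_, rfl⟩
    rw [add_assoc (i₁ + j₁)]
    exact tmul_mem_tensorGrading (tmul_mem_tensorGrading hr hm) (tmul_mem_tensorGrading hr' hm')
  · rintro _ ⟨i, j, v, hv, w, hw, rfl, rfl⟩
    exact pairing_mem_gr4 hv hw

variable (R M) in
lemma isInternal_gr4 : IsInternal (gr4 R M) := by
  have h := isInternal_tensorGrading (isInternal_gr2 R M) (isInternal_gr2 R M)
  let e := TensorProduct.assoc (ZMod 2) R.V M.V (T2 R M)
  refine isInternal_of_coaction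
    (Finsupp.mapRange.linearMap e.toLinearMap ∘ₗ gradedCoaction h ∘ₗ e.symm.toLinearMap)
    (fun n x hx => ?_) ?_
  · rw [gr4_eq_map_tensorGrading] at hx
    obtain ⟨z, hz, rfl⟩ := hx
    simp [e, gradedCoaction_of_mem h hz]
  · simp_rw [gr4_eq_map_tensorGrading, ← Submodule.map_iSup, h.submodule_iSup_eq_top,
      Submodule.map_top, LinearEquiv.range]

lemma tau4_mem_gr4 {n : ℤ} {x : T4 R M} (hx : x ∈ gr4 R M n) : tau4 R M x ∈ gr4 R M n := by
  refine (Submodule.span_le (p := (gr4 R M n).comap (tau4 R M))).2 ?_ hx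
  rintro _ ⟨i₁, j₁, i₂, j₂, r, hr, m, hm, r', hr', m', hm', rfl, rfl⟩
  refine Submodule.subset_span ⟨i₂, j₂, i₁, j₁, r', hr', m', hm', r, hr, m, hm, by ring, rfl⟩

variable (R M) in
/-- The operator `r ⊗ m ↦ ar ⊗ m` on `R ⊗ M`. -/
def outerL : A.V →ₗ[ZMod 2] T2 R M →ₗ[ZMod 2] T2 R M :=
  LinearMap.rTensorHom M.V ∘ₗ R.actL

variable (R M) in
/-- The operator `r ⊗ m ↦ r ⊗ ma` on `R ⊗ M`. -/
def outerR : A.V →ₗ[ZMod 2] T2 R M →ₗ[ZMod 2] T2 R M :=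
  LinearMap.lTensorHom R.V ∘ₗ M.actR.flip

@[simp]
lemma outerL_tmul (a : A.V) (r : R.V) (m : M.V) :
    outerL R M a (r ⊗ₜ m) = R.actL a r ⊗ₜ m := rfl

@[simp]
lemma outerR_tmul (a : A.V) (r : R.V) (m : M.V) :
    outerR R M a (r ⊗ₜ m) = r ⊗ₜ M.actR m a := rfl

theorem rel4_le {S : Submodule (ZMod 2) (T4 R M)} (hτ : S ≤ S.comap (tau4 R M))
    (inner : ∀ r a m y, pairing R M (R.actR r a ⊗ₜ m + r ⊗ₜ M.actL a m) y ∈ S)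
    (outer : ∀ a x y, pairing R M (outerL R M a x) y + pairing R M x (outerR R M a y) ∈ S) :
    rel4 R M ≤ S := by
  refine Submodule.span_le.2 ?_
  rintro _ (((⟨r, a, m, r', m', rfl⟩ | ⟨r, a, m, r', m', rfl⟩) | ⟨r, a, m, r', m', rfl⟩) |
    ⟨r, a, m, r', m', rfl⟩)
  · simpa using inner r a m (r' ⊗ₜ m')
  · exact outer a (r ⊗ₜ m) (r' ⊗ₜ m')
  · simpa [← pairing_tmul, add_comm] using hτ (outer a (r' ⊗ₜ m') (r ⊗ₜ m))
  · simpa [← pairing_tmul, tmul_add] using hτ (inner r' a m' (r ⊗ₜ m))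

lemma rel4_le_comap_tau4 : rel4 R M ≤ (rel4 R M).comap (tau4 R M) := by
  refine Submodule.span_le.2 ?_
  rintro _ (((⟨r, a, m, r', m', rfl⟩ | ⟨r, a, m, r', m', rfl⟩) | ⟨r, a, m, r', m', rfl⟩) |
    ⟨r, a, m, r', m', rfl⟩)
  · exact Submodule.subset_span (.inr ⟨r', a, m', r, m, rfl⟩)
  · exact Submodule.subset_span
      (.inl (.inr ⟨r', a, m', r, m, (map_add _ _ _).trans (add_comm _ _)⟩))
  · exact Submodule.subset_span
      (.inl (.inl (.inr ⟨r', a, m', r, m, (map_add _ _ _).trans (add_comm _ _)⟩)))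
  · exact Submodule.subset_span (.inl (.inl (.inl ⟨r', a, m', r, m, rfl⟩)))

lemma pairing_inner_mem_rel4 (r : R.V) (a : A.V) (m : M.V) (y : T2 R M) :
    pairing R M (R.actR r a ⊗ₜ m + r ⊗ₜ M.actL a m) y ∈ rel4 R M := by
  induction y using TensorProduct.induction_on with
  | zero => simp
  | add y y' hy hy' => rw [map_add]; exact add_mem hy hy'
  | tmul r' m' => exact Submodule.subset_span (.inl (.inl (.inl ⟨r, a, m, r', m', by simp⟩)))

lemma pairing_outer_mem_rel4 (a : A.V) (x y : T2 R M) :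
    pairing R M (outerL R M a x) y + pairing R M x (outerR R M a y) ∈ rel4 R M := by
  induction x using TensorProduct.induction_on with
  | zero => simp
  | add x x' hx hx' =>
    simp only [map_add, LinearMap.add_apply]
    rw [add_add_add_comm]
    exact add_mem hx hx'
  | tmul r m =>
    induction y using TensorProduct.induction_on with
    | zero => simp
    | add y y' hy hy' =>
      simp only [map_add]
      rw [add_add_add_comm]
      exact add_mem hy hy'
    | tmul r' m' => exact Submodule.subset_span (.inl (.inl (.inr ⟨r, a, m, r', m', rfl⟩)))

end HochschildSquare

section Homogeneity

variable {A : DGA (ZMod 2)} {R M : DGBimod A}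

lemma outerL_mem_gr2 {i j : ℤ} {a : A.V} (ha : a ∈ A.gr i) {x : T2 R M} (hx : x ∈ gr2 R M j) :
    outerL R M a x ∈ gr2 R M (i + j) := by
  refine (Submodule.span_le (p := (gr2 R M (i + j)).comap (outerL R M a))).2 ?_ hx
  rintro _ ⟨p, q, r, hr, m, hm, rfl, rfl⟩
  exact Submodule.subset_span ⟨i + p, q, _, R.actL_gr i p a ha r hr, m, hm, by ring, rfl⟩

lemma outerR_mem_gr2 {i j : ℤ} {a : A.V} (ha : a ∈ A.gr i) {x : T2 R M} (hx : x ∈ gr2 R M j) :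
    outerR R M a x ∈ gr2 R M (i + j) := by
  refine (Submodule.span_le (p := (gr2 R M (i + j)).comap (outerR R M a))).2 ?_ hx
  rintro _ ⟨p, q, r, hr, m, hm, rfl, rfl⟩
  exact Submodule.subset_span ⟨p, q + i, r, hr, _, M.actR_gr q i m hm a ha, by ring, rfl⟩

lemma inner_mem_gr2 {i j l : ℤ} {r : R.V} (hr : r ∈ R.gr i) {a : A.V} (ha : a ∈ A.gr j) {m : M.V}
    (hm : m ∈ M.gr l) : R.actR r a ⊗ₜ m + r ⊗ₜ M.actL a m ∈ gr2 R M (i + j + l) := by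
  refine add_mem (tmul_mem_tensorGrading (R.actR_gr i j r hr a ha) hm) ?_
  rw [add_assoc]
  exact tmul_mem_tensorGrading hr (M.actL_gr j l a ha m hm)

theorem rel4_le_iSup_inf_gr4 : rel4 R M ≤ ⨆ n, rel4 R M ⊓ gr4 R M n := by
  refine rel4_le (iSup_le fun n x hx => ?_) (fun r a m y => ?_) fun a x y => ?_
  · exact Submodule.mem_iSup_of_mem n ⟨rel4_le_comap_tau4 hx.1, tau4_mem_gr4 hx.2⟩
  · refine mem_of_forall_homogeneous R.internal
      (f := fun r => pairing R M (R.actR r a ⊗ₜ m + r ⊗ₜ M.actL a m) y)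
      (fun r r' => by simp only [map_add, LinearMap.add_apply, add_tmul]; abel) (fun i r hr => ?_) r
    refine mem_of_forall_homogeneous A.internal
      (f := fun a => pairing R M (R.actR r a ⊗ₜ m + r ⊗ₜ M.actL a m) y)
      (fun a a' => by simp only [map_add, LinearMap.add_apply, add_tmul, tmul_add]; abel)
      (fun j a ha => ?_) a
    refine mem_of_forall_homogeneous M.internal
      (f := fun m => pairing R M (R.actR r a ⊗ₜ m + r ⊗ₜ M.actL a m) y)
      (fun m m' => by simp only [map_add, LinearMap.add_apply, tmul_add]; abel) (fun l m hm => ?_) m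
    refine mem_of_forall_homogeneous (isInternal_gr2 R M) (map_add _) (fun n y hy => ?_) y
    exact Submodule.mem_iSup_of_mem _
      ⟨pairing_inner_mem_rel4 r a m y, pairing_mem_gr4 (inner_mem_gr2 hr ha hm) hy⟩
  · refine mem_of_forall_homogeneous A.internal
      (f := fun a => pairing R M (outerL R M a x) y + pairing R M x (outerR R M a y))
      (fun a a' => by simp only [map_add, LinearMap.add_apply]; abel) (fun l a ha => ?_) a
    refine mem_of_forall_homogeneous (isInternal_gr2 R M)
      (f := fun x => pairing R M (outerL R M a x) y + pairing R M x (outerR R M a y))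
      (fun x x' => by simp only [map_add, LinearMap.add_apply]; abel) (fun i x hx => ?_) x
    refine mem_of_forall_homogeneous (isInternal_gr2 R M)
      (f := fun y => pairing R M (outerL R M a x) y + pairing R M x (outerR R M a y))
      (fun y y' => by simp only [map_add]; abel) (fun j y hy => ?_) y
    refine Submodule.mem_iSup_of_mem (i + (l + j)) ⟨pairing_outer_mem_rel4 a x y,
      add_mem ?_ (pairing_mem_gr4 hx (outerR_mem_gr2 ha hy))⟩
    rw [add_left_comm, ← add_assoc]
    exact pairing_mem_gr4 (outerL_mem_gr2 ha hx) hy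

end Homogeneity

section Differential

variable {A : DGA (ZMod 2)} {R M : DGBimod A}

lemma negOnePow_smul {V : Type*} [AddCommGroup V] [Module (ZMod 2) V] (i : ℤ) (v : V) :
    (Int.negOnePow i : ℤ) • v = v := by
  rcases Int.even_or_odd i with hi | hi
  · simp [Int.negOnePow_even i hi]
  · simp [Int.negOnePow_odd i hi, ZModModule.neg_eq_self]

lemma d_actL (M : DGBimod A) (a : A.V) (m : M.V) :
    M.d (M.actL a m) = M.actL (A.d a) m + M.actL a (M.d m) := by
  induction a using homogeneous_induction A.internal with
  | mem i a ha => rw [M.leibnizL i a ha, negOnePow_smul]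
  | zero => simp
  | add a a' h h' => simp only [map_add, LinearMap.add_apply, h, h']; abel

lemma d_actR (M : DGBimod A) (m : M.V) (a : A.V) :
    M.d (M.actR m a) = M.actR (M.d m) a + M.actR m (A.d a) := by
  induction m using homogeneous_induction M.internal with
  | mem i m hm => rw [M.leibnizR i m hm, negOnePow_smul]
  | zero => simp
  | add m m' h h' => simp only [map_add, LinearMap.add_apply, h, h']; abel

@[simp]
lemma d2_tmul (r : R.V) (m : M.V) : d2 R M (r ⊗ₜ m) = R.d r ⊗ₜ m + r ⊗ₜ M.d m := rfl

lemma d4_pairing (v w : T2 R M) :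
    d4 R M (pairing R M v w) = pairing R M (d2 R M v) w + pairing R M v (d2 R M w) := by
  induction v using TensorProduct.induction_on with
  | zero => simp
  | add v v' h h' => simp only [map_add, LinearMap.add_apply, h, h']; abel
  | tmul r m =>
    simp [d4, d2, tmul_add, add_assoc]

lemma d4_tau4 (x : T4 R M) : d4 R M (tau4 R M x) = tau4 R M (d4 R M x) := by
  induction x using pairing_induction with
  | zero => simp
  | add x y hx hy => simp only [map_add, hx, hy]
  | pairing v w => simp only [tau4_pairing, d4_pairing, map_add, add_comm]

lemma d2_outerL (a : A.V) (x : T2 R M) :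
    d2 R M (outerL R M a x) = outerL R M (A.d a) x + outerL R M a (d2 R M x) := by
  induction x using TensorProduct.induction_on with
  | zero => simp
  | add x y hx hy => simp only [map_add, hx, hy]; abel
  | tmul r m => simp [d_actL, add_tmul, add_assoc]

lemma d2_outerR (a : A.V) (x : T2 R M) :
    d2 R M (outerR R M a x) = outerR R M (A.d a) x + outerR R M a (d2 R M x) := by
  induction x using TensorProduct.induction_on with
  | zero => simp
  | add x y hx hy => simp only [map_add, hx, hy]; abel
  | tmul r m => simp only [outerR_tmul, d2_tmul, d_actR, tmul_add, map_add]; abel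

lemma d2_inner (r : R.V) (a : A.V) (m : M.V) :
    d2 R M (R.actR r a ⊗ₜ m + r ⊗ₜ M.actL a m) =
      (R.actR (R.d r) a ⊗ₜ m + R.d r ⊗ₜ M.actL a m) +
      (R.actR r (A.d a) ⊗ₜ m + r ⊗ₜ M.actL (A.d a) m) +
      (R.actR r a ⊗ₜ M.d m + r ⊗ₜ M.actL a (M.d m)) := by
  simp only [map_add, d2_tmul, d_actR, d_actL, add_tmul, tmul_add]
  abel

theorem rel4_le_comap_d4 : rel4 R M ≤ (rel4 R M).comap (d4 R M) := by
  refine rel4_le (fun x hx => ?_) (fun r a m y => ?_) fun a x y => ?_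
  · rw [Submodule.mem_comap, Submodule.mem_comap, d4_tau4]
    exact rel4_le_comap_tau4 hx
  · rw [Submodule.mem_comap, d4_pairing, d2_inner]
    have h := add_mem (add_mem (add_mem (pairing_inner_mem_rel4 (R.d r) a m y)
      (pairing_inner_mem_rel4 r (A.d a) m y)) (pairing_inner_mem_rel4 r a (M.d m) y))
      (pairing_inner_mem_rel4 r a m (d2 R M y))
    simpa only [map_add, LinearMap.add_apply] using h
  · rw [Submodule.mem_comap, map_add, d4_pairing, d4_pairing, d2_outerL, d2_outerR]
    have h := add_mem (pairing_outer_mem_rel4 (A.d a) x y) (add_mem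
      (pairing_outer_mem_rel4 a (d2 R M x) y) (pairing_outer_mem_rel4 a x (d2 R M y)))
    convert h using 1
    simp only [map_add, LinearMap.add_apply]
    abel

end Differential

section Filtration

variable {k V W : Type*} [CommRing k] [AddCommGroup V] [Module k V] [AddCommGroup W] [Module k W]

theorem bijective_lsum_of_filtration {I : ℕ → Type*} (φ : (Σ n, I n) → W →ₗ[k] V)
    {Fil : ℕ → Submodule k V} (zero : Fil 0 = ⊥) (mono : Monotone Fil) (top : ⨆ n, Fil n = ⊤)
    (mem : ∀ n i w, φ ⟨n, i⟩ w ∈ Fil (n + 1))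
    (span : ∀ n, Fil (n + 1) ≤ Fil n ⊔ ⨆ i, LinearMap.range (φ ⟨n, i⟩))
    (indep : ∀ n (c : I n →₀ W), (c.sum fun i w => φ ⟨n, i⟩ w) ∈ Fil n → c = 0) :
    Function.Bijective (Finsupp.lsum k φ) := by
  constructor
  · refine (injective_iff_map_eq_zero _).2 fun c hc => ?_
    by_contra hne
    have hsupp : c.splitSupport.Nonempty := by
      refine Finset.nonempty_iff_ne_empty.2 fun hempty => hne (Finsupp.support_eq_empty.1 ?_)
      simp [Finsupp.sigma_support, hempty]
    let n := c.splitSupport.max' hsupp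
    have hn : n ∈ c.splitSupport := c.splitSupport.max'_mem hsupp
    refine (c.mem_splitSupport_iff_nonzero n).1 hn (indep n _ ?_)
    rw [Finsupp.lsum_apply, Finsupp.sigma_sum, ← Finset.add_sum_erase _ _ hn] at hc
    rw [eq_neg_of_add_eq_zero_left hc]
    refine neg_mem (sum_mem fun m hm => sum_mem fun i _ => mono ?_ (mem m i _))
    rw [Finset.mem_erase] at hm
    exact Nat.succ_le_of_lt (lt_of_le_of_ne (c.splitSupport.le_max' m hm.2) hm.1)
  · refine LinearMap.range_eq_top.1 (top_le_iff.1 (top ▸ iSup_le fun n => ?_))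
    induction n with
    | zero => simp [zero]
    | succ n ih =>
      refine (span n).trans (sup_le ih (iSup_le fun i => ?_))
      rintro _ ⟨w, rfl⟩
      exact ⟨Finsupp.single ⟨n, i⟩ w, by simp⟩

end Filtration

section CellBimodules

variable {k : Type} [CommRing k] {A : DGA k}

/-- The family `g` freely generates the underlying ungraded bimodule of `C`: the map
`⨁ᵢ A ⊗ A → C`, `(a ⊗ b)_i ↦ a g_i b`, is bijective. -/
def IsBimodBasis (C : DGBimod A) {I : Type*} (g : I → C.V) : Prop :=
  Function.Bijective (Finsupp.lsum k fun i => sandwichT C (g i))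

lemma sandwichT_mem {C : DGBimod A} {S : Submodule k C.V} (hL : ∀ a, ∀ x ∈ S, C.actL a x ∈ S)
    (hR : ∀ a, ∀ x ∈ S, C.actR x a ∈ S) {g : C.V} (hg : g ∈ S) (w : A.V ⊗[k] A.V) :
    sandwichT C g w ∈ S := by
  induction w with
  | zero => simp
  | add w w' hw hw' => rw [map_add]; exact add_mem hw hw'
  | tmul a b => exact hR b _ (hL a _ hg)

theorem IsCellBimod.exists_isBimodBasis {C : DGBimod A} (hC : IsCellBimod C) :
    ∃ (I : Type) (g : I → C.V), IsBimodBasis C g := by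
  obtain ⟨Fil, zero, mono, top, -, hL, hR, hfree⟩ := hC
  choose I g _ g_mem _ _ span indep using hfree
  refine ⟨Σ n, I n, fun x => g x.1 x.2, bijective_lsum_of_filtration _ zero mono top
    (fun n i w => sandwichT_mem (hL _) (hR _) (g_mem n i) w) span fun n c hc => ?_⟩
  ext1 i
  by_cases hi : i ∈ c.support
  · exact indep n c.support c hc i hi
  · simpa using hi

end CellBimodules

section InnerRelations

variable {A : DGA (ZMod 2)} {R M : DGBimod A}

variable (R M) in
/-- The relations `ra ⊗ m ∼ r ⊗ am` presenting `R ⊠_A M` as a quotient of `R ⊗ M`. -/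
def innerRel : Submodule (ZMod 2) (T2 R M) :=
  Submodule.span (ZMod 2) {z | ∃ r a m, z = R.actR r a ⊗ₜ m + r ⊗ₜ M.actL a m}

lemma innerRel_le_rel2 : innerRel R M ≤ rel2 R M :=
  Submodule.span_mono Set.subset_union_left

lemma outerL_add_outerR_mem_rel2 (a : A.V) (x : T2 R M) :
    outerL R M a x + outerR R M a x ∈ rel2 R M := by
  induction x using TensorProduct.induction_on with
  | zero => simp
  | add x y hx hy =>
    simp only [map_add]
    rw [add_add_add_comm]
    exact add_mem hx hy
  | tmul r m => exact Submodule.subset_span (.inr ⟨r, a, m, rfl⟩)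

lemma rel2_le {S : Submodule (ZMod 2) (T2 R M)}
    (inner : ∀ r a m, R.actR r a ⊗ₜ m + r ⊗ₜ M.actL a m ∈ S)
    (outer : ∀ a x, outerL R M a x + outerR R M a x ∈ S) : rel2 R M ≤ S := by
  refine Submodule.span_le.2 ?_
  rintro _ (⟨r, a, m, rfl⟩ | ⟨r, a, m, rfl⟩)
  · exact inner r a m
  · exact outer a (r ⊗ₜ m)

lemma pairing_mem_rel4_of_left {x : T2 R M} (hx : x ∈ innerRel R M) (y : T2 R M) :
    pairing R M x y ∈ rel4 R M := by
  refine (Submodule.span_le (p := (rel4 R M).comap ((pairing R M).flip y))).2 ?_ hx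
  rintro _ ⟨r, a, m, rfl⟩
  exact pairing_inner_mem_rel4 r a m y

lemma pairing_mem_rel4_of_right (x : T2 R M) {y : T2 R M} (hy : y ∈ innerRel R M) :
    pairing R M x y ∈ rel4 R M := by
  rw [← tau4_pairing]
  exact rel4_le_comap_tau4 (pairing_mem_rel4_of_left hy x)

end InnerRelations

section TwistedPairing

variable {A : DGA (ZMod 2)} {X : Type*} [AddCommGroup X] [Module (ZMod 2) X]
  (act : A.V →ₗ[ZMod 2] X →ₗ[ZMod 2] X)

/-- For a right action `act` of `A` on `X`, written `x a`, the bilinear map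
`(a ⊗ x, a' ⊗ x') ↦ x a' ⊗ x' a` on `A ⊗ X`. -/
def twistedPairing :
    A.V ⊗[ZMod 2] X →ₗ[ZMod 2] A.V ⊗[ZMod 2] X →ₗ[ZMod 2] X ⊗[ZMod 2] X :=
  curry (map (lift act.flip) (lift act) ∘ₗ
    (tensorTensorTensorComm (ZMod 2) X A.V A.V X).toLinearMap ∘ₗ
    (TensorProduct.comm (ZMod 2) A.V X).toLinearMap.rTensor _)

@[simp]
lemma twistedPairing_tmul_tmul (a a' : A.V) (x x' : X) :
    twistedPairing act (a ⊗ₜ x) (a' ⊗ₜ x') = act a' x ⊗ₜ act a x' := by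
  simp [twistedPairing]

lemma comm_twistedPairing (s t : A.V ⊗[ZMod 2] X) :
    TensorProduct.comm (ZMod 2) X X (twistedPairing act s t) = twistedPairing act t s := by
  induction s with
  | zero => simp
  | add s s' hs hs' => simp only [map_add, LinearMap.add_apply, hs, hs']
  | tmul a x =>
    induction t with
    | zero => simp
    | add t t' ht ht' => simp only [map_add, LinearMap.add_apply, ht, ht']
    | tmul a' x' => simp

variable {act}

lemma twistedPairing_rTensor_mul (hact : ∀ a b x, act (A.mul a b) x = act b (act a x)) (a : A.V)
    (s t : A.V ⊗[ZMod 2] X) :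
    twistedPairing act ((A.mul a).rTensor X s) t =
      twistedPairing act s ((act a).lTensor A.V t) := by
  induction s with
  | zero => simp
  | add s s' hs hs' => simp only [map_add, LinearMap.add_apply, hs, hs']
  | tmul b x =>
    induction t with
    | zero => simp
    | add t t' ht ht' => simp only [map_add, ht, ht']
    | tmul b' x' => simp [hact]

lemma lift_rTensor_mul (hact : ∀ a b x, act (A.mul a b) x = act b (act a x)) (a : A.V)
    (t : A.V ⊗[ZMod 2] X) :
    lift act ((A.mul a).rTensor X t) = lift act ((act a).lTensor A.V t) := by
  induction t with
  | zero => simp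
  | add t t' ht ht' => simp only [map_add, ht, ht']
  | tmul b x => simp [hact]

lemma twistedPairing_self_sub_mem (t : A.V ⊗[ZMod 2] X) :
    twistedPairing act t t - lift act t ⊗ₜ lift act t ∈
      LinearMap.range (onePlus (TensorProduct.comm (ZMod 2) X X).toLinearMap) := by
  let δ : A.V ⊗[ZMod 2] X →ₗ[ZMod 2] A.V ⊗[ZMod 2] X →ₗ[ZMod 2] X ⊗[ZMod 2] X :=
    twistedPairing act - (TensorProduct.mk (ZMod 2) X X).compl₁₂ (lift act) (lift act)
  have hδ (s t : A.V ⊗[ZMod 2] X) : TensorProduct.comm (ZMod 2) X X (δ s t) = δ t s := by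
    simp [δ, comm_twistedPairing]
  change δ t t ∈ _
  induction t with
  | zero => simp
  | add s t hs ht =>
    exact (Submodule.sub_mem_iff_left _ (add_mem hs ht)).1
      (add_apply_self_sub_mem_range_onePlus (τ := (TensorProduct.comm (ZMod 2) X X).toLinearMap)
        hδ s t)
  | tmul a x => simp [δ]

end TwistedPairing

section Basis

variable {A : DGA (ZMod 2)} {C M : DGBimod A} {I : Type*} {g : I → C.V}

lemma IsBimodBasis.induction (hg : IsBimodBasis C g) {motive : C.V → Prop} (zero : motive 0)
    (add : ∀ x y, motive x → motive y → motive (x + y))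
    (mem : ∀ a i b, motive (C.actR (C.actL a (g i)) b)) (c : C.V) : motive c := by
  obtain ⟨f, rfl⟩ := hg.2 c
  induction f using Finsupp.induction_linear with
  | zero => simpa using zero
  | add f g hf hg => rw [map_add]; exact add _ _ hf hg
  | single i t =>
    rw [Finsupp.lsum_single]
    induction t with
    | zero => simpa using zero
    | add x y hx hy => rw [map_add]; exact add _ _ hx hy
    | tmul a b => exact mem a i b

/-- The inverse of the isomorphism `⨁ᵢ A ⊗ A ≃ C` given by a basis. -/
def IsBimodBasis.repr (hg : IsBimodBasis C g) : C.V →ₗ[ZMod 2] I →₀ A.V ⊗[ZMod 2] A.V :=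
  (LinearEquiv.ofBijective _ hg).symm.toLinearMap

lemma IsBimodBasis.repr_apply (hg : IsBimodBasis C g) (a b : A.V) (i : I) :
    hg.repr (C.actR (C.actL a (g i)) b) = Finsupp.single i (a ⊗ₜ b) := by
  refine (LinearEquiv.symm_apply_eq (LinearEquiv.ofBijective _ hg)).2 ?_
  exact (Finsupp.lsum_single (ZMod 2) (f := fun i => sandwichT C (g i)) i (a ⊗ₜ b)).symm

variable (M I) in
/-- The right action of `A` on the direct sum of copies of `M` indexed by `I`. -/
def coordAct : A.V →ₗ[ZMod 2] (I →₀ M.V) →ₗ[ZMod 2] I →₀ M.V :=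
  (Finsupp.lsum (ZMod 2) fun i => M.actR.compr₂ (Finsupp.lsingle i)).flip

@[simp]
lemma coordAct_single (a : A.V) (i : I) (m : M.V) :
    coordAct M I a (Finsupp.single i m) = Finsupp.single i (M.actR m a) := by
  simp [coordAct]

lemma coordAct_mul (a b : A.V) (x : I →₀ M.V) :
    coordAct M I (A.mul a b) x = coordAct M I b (coordAct M I a x) := by
  induction x using Finsupp.induction_linear with
  | zero => simp
  | add x y hx hy => simp only [map_add, hx, hy]
  | single i m => simp only [coordAct_single, M.actR_mul]

variable (M) in
/-- The coordinates `a g_i b ⊗ m ↦ a ⊗ (b m)_i` identifying `C ⊠_A M` with `⨁ᵢ A ⊗ M`. -/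
def IsBimodBasis.coords (hg : IsBimodBasis C g) : T2 C M →ₗ[ZMod 2] A.V ⊗[ZMod 2] (I →₀ M.V) :=
  lift (Finsupp.lsum (ZMod 2) (fun i => curry ((Finsupp.lsingle i ∘ₗ lift M.actL).lTensor A.V ∘ₗ
    (TensorProduct.assoc (ZMod 2) A.V A.V M.V).toLinearMap)) ∘ₗ hg.repr)

lemma IsBimodBasis.coords_apply (hg : IsBimodBasis C g) (a b : A.V) (i : I) (m : M.V) :
    hg.coords M (C.actR (C.actL a (g i)) b ⊗ₜ m) = a ⊗ₜ Finsupp.single i (M.actL b m) := by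
  simp [coords, hg.repr_apply]

lemma IsBimodBasis.coords_inner (hg : IsBimodBasis C g) (r : C.V) (a : A.V) (m : M.V) :
    hg.coords M (C.actR r a ⊗ₜ m + r ⊗ₜ M.actL a m) = 0 := by
  suffices h : hg.coords M (C.actR r a ⊗ₜ m) = hg.coords M (r ⊗ₜ M.actL a m) by
    rw [map_add, h, ZModModule.add_self]
  induction r using hg.induction with
  | zero => simp
  | add x y hx hy => simp only [map_add, LinearMap.add_apply, add_tmul, hx, hy]
  | mem b i b' => rw [C.actR_mul, hg.coords_apply, hg.coords_apply, M.actL_mul]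

lemma IsBimodBasis.coords_outerL (hg : IsBimodBasis C g) (a : A.V) (x : T2 C M) :
    hg.coords M (outerL C M a x) = (A.mul a).rTensor _ (hg.coords M x) := by
  induction x using TensorProduct.induction_on with
  | zero => simp
  | add x y hx hy => simp only [map_add, hx, hy]
  | tmul c m =>
    induction c using hg.induction with
    | zero => simp
    | add x y hx hy => simp only [add_tmul, map_add, hx, hy]
    | mem b i b' =>
      rw [outerL_tmul, ← C.actLR, ← C.actL_mul, hg.coords_apply, hg.coords_apply,
        LinearMap.rTensor_tmul]

lemma IsBimodBasis.coords_outerR (hg : IsBimodBasis C g) (a : A.V) (x : T2 C M) :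
    hg.coords M (outerR C M a x) = (coordAct M I a).lTensor A.V (hg.coords M x) := by
  induction x using TensorProduct.induction_on with
  | zero => simp
  | add x y hx hy => simp only [map_add, hx, hy]
  | tmul c m =>
    induction c using hg.induction with
    | zero => simp
    | add x y hx hy => simp only [add_tmul, map_add, hx, hy]
    | mem b i b' =>
      rw [outerR_tmul, hg.coords_apply, hg.coords_apply, LinearMap.lTensor_tmul, coordAct_single,
        M.actLR]

/-- The map `⨁ᵢ M → C ⊗ M`, `(m)_i ↦ g_i ⊗ m`, attached to a family `g` in `C`. -/
def basisTensor (M : DGBimod A) (g : I → C.V) : (I →₀ M.V) →ₗ[ZMod 2] T2 C M :=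
  Finsupp.lsum (ZMod 2) fun i => TensorProduct.mk (ZMod 2) C.V M.V (g i)

@[simp]
lemma basisTensor_single (i : I) (m : M.V) :
    basisTensor M g (Finsupp.single i m) = g i ⊗ₜ m := by
  simp [basisTensor]

lemma outerR_basisTensor (a : A.V) (x : I →₀ M.V) :
    outerR C M a (basisTensor M g x) = basisTensor M g (coordAct M I a x) := by
  induction x using Finsupp.induction_linear with
  | zero => simp
  | add x y hx hy => simp only [map_add, hx, hy]
  | single i m => simp

lemma outerL_outerR_comm (a b : A.V) (x : T2 C M) :
    outerL C M a (outerR C M b x) = outerR C M b (outerL C M a x) := by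
  induction x using TensorProduct.induction_on with
  | zero => simp
  | add x y hx hy => simp only [map_add, hx, hy]
  | tmul c m => simp

/-- The section `a ⊗ (m)_i ↦ a g_i ⊗ m` of `IsBimodBasis.coords`. -/
def ofCoords (M : DGBimod A) (g : I → C.V) : A.V ⊗[ZMod 2] (I →₀ M.V) →ₗ[ZMod 2] T2 C M :=
  lift ((outerL C M).compl₂ (basisTensor M g))

@[simp]
lemma ofCoords_tmul (a : A.V) (x : I →₀ M.V) :
    ofCoords M g (a ⊗ₜ x) = outerL C M a (basisTensor M g x) := rfl

lemma IsBimodBasis.ofCoords_coords_sub_mem (hg : IsBimodBasis C g) (x : T2 C M) :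
    ofCoords M g (hg.coords M x) - x ∈ innerRel C M := by
  induction x using TensorProduct.induction_on with
  | zero => simp
  | add x y hx hy => simpa only [map_add, add_sub_add_comm] using add_mem hx hy
  | tmul c m =>
    induction c using hg.induction with
    | zero => simp
    | add x y hx hy => simpa only [add_tmul, map_add, add_sub_add_comm] using add_mem hx hy
    | mem a i b =>
      refine Submodule.subset_span ⟨C.actL a (g i), b, m, ?_⟩
      rw [hg.coords_apply, ofCoords_tmul, basisTensor_single, outerL_tmul, ZModModule.sub_eq_add,
        add_comm]

/-- The extension `(m)_i ⊗ (m')_j ↦ g_i ⊗ (m ⊗ (g_j ⊗ m'))` of `basisTensor` to tensor squares. -/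
def basisTensorSquare (M : DGBimod A) (g : I → C.V) :
    (I →₀ M.V) ⊗[ZMod 2] (I →₀ M.V) →ₗ[ZMod 2] T4 C M :=
  lift ((pairing C M).compl₁₂ (basisTensor M g) (basisTensor M g))

@[simp]
lemma basisTensorSquare_tmul (x y : I →₀ M.V) :
    basisTensorSquare M g (x ⊗ₜ y) = pairing C M (basisTensor M g x) (basisTensor M g y) := rfl

lemma basisTensorSquare_twistedPairing_sub_mem (s t : A.V ⊗[ZMod 2] (I →₀ M.V)) :
    basisTensorSquare M g (twistedPairing (coordAct M I) s t) -
      pairing C M (ofCoords M g s) (ofCoords M g t) ∈ rel4 C M := by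
  induction s with
  | zero => simp
  | add s s' hs hs' =>
    simpa only [map_add, LinearMap.add_apply, add_sub_add_comm] using add_mem hs hs'
  | tmul a x =>
    induction t with
    | zero => simp
    | add t t' ht ht' => simpa only [map_add, add_sub_add_comm] using add_mem ht ht'
    | tmul a' x' =>
      have h := pairing_outer_mem_rel4 a (basisTensor M g x)
        (outerL C M a' (basisTensor M g x'))
      have h' := rel4_le_comap_tau4 (pairing_outer_mem_rel4 a'
        (outerR C M a (basisTensor M g x')) (basisTensor M g x))
      rw [Submodule.mem_comap, map_add, tau4_pairing, tau4_pairing, outerL_outerR_comm] at h'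
      have := add_mem h h'
      rw [ZModModule.add_add_add_cancel] at this
      rw [ZModModule.sub_eq_add, add_comm]
      simpa [outerR_basisTensor] using this

lemma basisTensor_lift_sub_mem (t : A.V ⊗[ZMod 2] (I →₀ M.V)) :
    basisTensor M g (lift (coordAct M I) t) - ofCoords M g t ∈ rel2 C M := by
  induction t with
  | zero => simp
  | add s t hs ht => simpa only [map_add, add_sub_add_comm] using add_mem hs ht
  | tmul a x =>
    rw [ZModModule.sub_eq_add, add_comm, lift.tmul, ofCoords_tmul, ← outerR_basisTensor]
    exact outerL_add_outerR_mem_rel2 a _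

namespace IsBimodBasis

variable (M) in
/-- The map `a g_i b ⊗ m ↦ (b m a)_i`, which identifies `HC(M)` with `⨁ᵢ M`. -/
def toCoprod (hg : IsBimodBasis C g) : T2 C M →ₗ[ZMod 2] I →₀ M.V :=
  lift (coordAct M I) ∘ₗ hg.coords M

variable (M) in
/-- The map `a g_i b ⊗ (m ⊗ (a' g_j b' ⊗ m')) ↦ (b m a')_i ⊗ (b' m' a)_j`, which identifies
`HC(M ⊗̃_A M)` with the tensor square of `⨁ᵢ M`. -/
def toCoprodSquare (hg : IsBimodBasis C g) :
    T4 C M →ₗ[ZMod 2] (I →₀ M.V) ⊗[ZMod 2] (I →₀ M.V) :=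
  lift ((twistedPairing (coordAct M I)).compl₁₂ (hg.coords M) (hg.coords M)) ∘ₗ
    (TensorProduct.assoc (ZMod 2) C.V M.V (T2 C M)).symm.toLinearMap

lemma toCoprodSquare_pairing (hg : IsBimodBasis C g) (x y : T2 C M) :
    hg.toCoprodSquare M (pairing C M x y) =
      twistedPairing (coordAct M I) (hg.coords M x) (hg.coords M y) := by
  simp [toCoprodSquare, pairing]

lemma toCoprodSquare_tau4 (hg : IsBimodBasis C g) (x : T4 C M) :
    hg.toCoprodSquare M (tau4 C M x) =
      TensorProduct.comm (ZMod 2) _ _ (hg.toCoprodSquare M x) := by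
  induction x using pairing_induction with
  | zero => simp
  | add x y hx hy => simp only [map_add, hx, hy]
  | pairing v w =>
    rw [tau4_pairing, toCoprodSquare_pairing, toCoprodSquare_pairing, comm_twistedPairing]

lemma frobeniusHom_toCoprod (hg : IsBimodBasis C g) :
    FrobeniusHom (pairing C M) (tau4 C M) (rel2 C M) (rel4 C M)
      (TensorProduct.mk (ZMod 2) _ _) (TensorProduct.comm (ZMod 2) _ _).toLinearMap ⊥ ⊥
      (hg.toCoprod M) (hg.toCoprodSquare M) where
  map_le := by
    refine rel2_le (fun r a m => ?_) fun a x => ?_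
    · rw [Submodule.mem_comap, Submodule.mem_bot, toCoprod, LinearMap.comp_apply, hg.coords_inner,
        map_zero]
    · rw [Submodule.mem_comap, Submodule.mem_bot, toCoprod, LinearMap.comp_apply, map_add,
        hg.coords_outerL, hg.coords_outerR, map_add, lift_rTensor_mul coordAct_mul,
        ZModModule.add_self]
  map_rel_le := by
    refine rel4_le (fun x hx => ?_) (fun r a m y => ?_) fun a x y => ?_
    · rw [Submodule.mem_comap, Submodule.mem_bot] at hx
      rw [Submodule.mem_comap, Submodule.mem_comap, toCoprodSquare_tau4, hx, map_zero]
      exact zero_mem _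
    · rw [Submodule.mem_comap, Submodule.mem_bot, toCoprodSquare_pairing, hg.coords_inner,
        map_zero, LinearMap.zero_apply]
    · rw [Submodule.mem_comap, Submodule.mem_bot, map_add, toCoprodSquare_pairing,
        toCoprodSquare_pairing, hg.coords_outerL, hg.coords_outerR,
        twistedPairing_rTensor_mul coordAct_mul, ZModModule.add_self]
  map_invol := hg.toCoprodSquare_tau4
  map_apply_self v := by
    rw [toCoprodSquare_pairing]
    exact Submodule.mem_sup_right (twistedPairing_self_sub_mem (hg.coords M v))

end IsBimodBasis

variable (M g) in
lemma frobeniusHom_basisTensor :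
    FrobeniusHom (TensorProduct.mk (ZMod 2) _ _) (TensorProduct.comm (ZMod 2) _ _).toLinearMap ⊥ ⊥
      (pairing C M) (tau4 C M) (rel2 C M) (rel4 C M)
      (basisTensor M g) (basisTensorSquare M g) where
  map_le := bot_le
  map_rel_le := bot_le
  map_invol x := by
    induction x with
    | zero => simp
    | add x y hx hy => simp only [map_add, hx, hy]
    | tmul x y => simp
  map_apply_self x := by simp

theorem IsBimodBasis.isFrobeniusIso_pairing (hg : IsBimodBasis C g) :
    IsFrobeniusIso (pairing C M) (tau4 C M) (rel2 C M) (rel4 C M) := by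
  refine isFrobeniusIso_mk_comm.of_retract hg.frobeniusHom_toCoprod
    (frobeniusHom_basisTensor M g) (fun v => ?_) fun x => ?_
  · simpa [IsBimodBasis.toCoprod] using add_mem (basisTensor_lift_sub_mem (g := g) (hg.coords M v))
      (innerRel_le_rel2 (hg.ofCoords_coords_sub_mem v))
  · induction x using pairing_induction with
    | zero => simp
    | add x y hx hy => simpa only [map_add, add_sub_add_comm] using add_mem hx hy
    | pairing v w =>
      have hv := pairing_mem_rel4_of_left (hg.ofCoords_coords_sub_mem v)
        (ofCoords M g (hg.coords M w))
      have hw := pairing_mem_rel4_of_right v (hg.ofCoords_coords_sub_mem w)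
      rw [map_sub, LinearMap.sub_apply] at hv
      rw [map_sub] at hw
      rw [hg.toCoprodSquare_pairing]
      have hvw := basisTensorSquare_twistedPairing_sub_mem (g := g) (hg.coords M v) (hg.coords M w)
      simpa only [sub_add_sub_cancel] using add_mem hvw (add_mem hv hw)

end Basis

section Retract

variable {A : DGA (ZMod 2)} {R R' : DGBimod A}

/-- The map `r ⊗ (m ⊗ (r' ⊗ m')) ↦ φ r ⊗ (m ⊗ (φ r' ⊗ m'))` on `R ⊗ M ⊗ R ⊗ M`. -/
def mapT4 (M : DGBimod A) (φ : R.V →ₗ[ZMod 2] R'.V) : T4 R M →ₗ[ZMod 2] T4 R' M :=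
  TensorProduct.map φ ((φ.rTensor M.V).lTensor M.V)

variable {M : DGBimod A} {φ : R.V →ₗ[ZMod 2] R'.V}

@[simp]
lemma mapT4_pairing (v w : T2 R M) :
    mapT4 M φ (pairing R M v w) = pairing R' M (φ.rTensor M.V v) (φ.rTensor M.V w) := by
  induction v using TensorProduct.induction_on with
  | zero => simp
  | add v v' hv hv' => simp only [map_add, LinearMap.add_apply, hv, hv']
  | tmul r m => simp [mapT4]

lemma rTensor_outerL (hL : ∀ a r, φ (R.actL a r) = R'.actL a (φ r)) (a : A.V) (x : T2 R M) :
    φ.rTensor M.V (outerL R M a x) = outerL R' M a (φ.rTensor M.V x) := by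
  induction x using TensorProduct.induction_on with
  | zero => simp
  | add x y hx hy => simp only [map_add, hx, hy]
  | tmul r m => simp [hL]

lemma rTensor_outerR (a : A.V) (x : T2 R M) :
    φ.rTensor M.V (outerR R M a x) = outerR R' M a (φ.rTensor M.V x) := by
  induction x using TensorProduct.induction_on with
  | zero => simp
  | add x y hx hy => simp only [map_add, hx, hy]
  | tmul r m => simp

lemma rTensor_inner (hR : ∀ r a, φ (R.actR r a) = R'.actR (φ r) a) (r : R.V) (a : A.V) (m : M.V) :
    φ.rTensor M.V (R.actR r a ⊗ₜ m + r ⊗ₜ M.actL a m) =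
      R'.actR (φ r) a ⊗ₜ m + φ r ⊗ₜ M.actL a m := by
  simp [hR]

variable (M) in
theorem frobeniusHom_rTensor (hL : ∀ a r, φ (R.actL a r) = R'.actL a (φ r))
    (hR : ∀ r a, φ (R.actR r a) = R'.actR (φ r) a) :
    FrobeniusHom (pairing R M) (tau4 R M) (rel2 R M) (rel4 R M)
      (pairing R' M) (tau4 R' M) (rel2 R' M) (rel4 R' M) (φ.rTensor M.V) (mapT4 M φ) := by
  have hτ (x : T4 R M) : mapT4 M φ (tau4 R M x) = tau4 R' M (mapT4 M φ x) := by
    induction x using pairing_induction with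
    | zero => simp
    | add x y hx hy => simp only [map_add, hx, hy]
    | pairing v w => simp
  refine ⟨rel2_le (fun r a m => ?_) fun a x => ?_, rel4_le (fun x hx => ?_) (fun r a m y => ?_)
    fun a x y => ?_, hτ, fun v => by simp⟩
  · rw [Submodule.mem_comap, rTensor_inner hR]
    exact innerRel_le_rel2 (Submodule.subset_span ⟨φ r, a, m, rfl⟩)
  · rw [Submodule.mem_comap, map_add, rTensor_outerL hL, rTensor_outerR]
    exact outerL_add_outerR_mem_rel2 a _
  · rw [Submodule.mem_comap, Submodule.mem_comap, hτ]
    exact rel4_le_comap_tau4 hx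
  · rw [Submodule.mem_comap, mapT4_pairing, rTensor_inner hR]
    exact pairing_inner_mem_rel4 _ a m _
  · rw [Submodule.mem_comap, map_add, mapT4_pairing, mapT4_pairing, rTensor_outerL hL,
      rTensor_outerR]
    exact pairing_outer_mem_rel4 a _ _

theorem IsCellRetract.isFrobeniusIso_pairing (hR : IsCellRetract R) (M : DGBimod A) :
    IsFrobeniusIso (pairing R M) (tau4 R M) (rel2 R M) (rel4 R M) := by
  obtain ⟨C, hC, ι, r, ⟨-, -, ιL, ιR⟩, ⟨-, -, rL, rR⟩, -, hrι⟩ := hR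
  obtain ⟨I, g, hg⟩ := hC.exists_isBimodBasis
  have retract (v : T2 R M) : r.rTensor M.V (ι.rTensor M.V v) = v := by
    rw [← LinearMap.rTensor_comp_apply, hrι, LinearMap.rTensor_id_apply]
  refine hg.isFrobeniusIso_pairing.of_retract (frobeniusHom_rTensor M ιL ιR)
    (frobeniusHom_rTensor M rL rR) (fun v => by simp [retract]) fun x => ?_
  induction x using pairing_induction with
  | zero => simp
  | add x y hx hy => simpa only [map_add, add_sub_add_comm] using add_mem hx hy
  | pairing v w => simp [retract]

end Retract

section GradedSquares

variable {A : DGA (ZMod 2)} {R M : DGBimod A}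

lemma onePlus_tau4_pairing_self (v : T2 R M) : onePlus (tau4 R M) (pairing R M v v) = 0 := by
  simp [ZModModule.add_self]

lemma onePlus_tau4_mem_gr4 {n : ℤ} {x : T4 R M} (hx : x ∈ gr4 R M n) :
    onePlus (tau4 R M) x ∈ gr4 R M n :=
  add_mem hx (tau4_mem_gr4 hx)

lemma gradedProj_onePlus_tau4 (n : ℤ) (x : T4 R M) :
    gradedProj (isInternal_gr4 R M) n (onePlus (tau4 R M) x) =
      onePlus (tau4 R M) (gradedProj (isInternal_gr4 R M) n x) :=
  gradedProj_map _ _ (fun _ _ => onePlus_tau4_mem_gr4) n x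

lemma exists_gradedProj_sub_onePlus_tau4_mem_rel4 (n : ℤ) {x : T4 R M}
    (hx : x ∈ rel4 R M ⊔ LinearMap.range (onePlus (tau4 R M))) :
    ∃ t ∈ gr4 R M n,
      gradedProj (isInternal_gr4 R M) n x - onePlus (tau4 R M) t ∈ rel4 R M := by
  obtain ⟨y, hy, _, ⟨t, rfl⟩, rfl⟩ := Submodule.mem_sup.1 hx
  refine ⟨gradedProj (isInternal_gr4 R M) n t, gradedProj_mem _ n t, ?_⟩
  rw [map_add, gradedProj_onePlus_tau4, add_sub_cancel_right]
  exact gradedProj_mem_of_le_iSup_inf _ rel4_le_iSup_inf_gr4 n hy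

lemma gradedProj_mem_rel4_sup_range (n : ℤ) {x : T4 R M}
    (hx : x ∈ rel4 R M ⊔ LinearMap.range (onePlus (tau4 R M))) :
    gradedProj (isInternal_gr4 R M) n x ∈ rel4 R M ⊔ LinearMap.range (onePlus (tau4 R M)) := by
  obtain ⟨t, -, ht⟩ := exists_gradedProj_sub_onePlus_tau4_mem_rel4 n hx
  rw [← sub_add_cancel (gradedProj _ n x) (onePlus (tau4 R M) t)]
  exact Submodule.add_mem_sup ht ⟨t, rfl⟩

lemma gradedProj_add_pairing_self_sub_mem_range (m : ℤ) (v w : T2 R M) :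
    gradedProj (isInternal_gr4 R M) m (pairing R M (v + w) (v + w)) -
        (gradedProj (isInternal_gr4 R M) m (pairing R M v v) +
          gradedProj (isInternal_gr4 R M) m (pairing R M w w)) ∈
      LinearMap.range (onePlus (tau4 R M)) := by
  obtain ⟨t, ht⟩ := add_apply_self_sub_mem_range_onePlus (μ := pairing R M) tau4_pairing v w
  refine ⟨gradedProj (isInternal_gr4 R M) m t, ?_⟩
  rw [← gradedProj_onePlus_tau4, ht, map_sub,
    map_add (gradedProj (isInternal_gr4 R M) m) (pairing R M v v)]

theorem gradedProj_pairing_self_mem_range_of_odd {m : ℤ} (hm : Odd m) (u : T2 R M) :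
    gradedProj (isInternal_gr4 R M) m (pairing R M u u) ∈
      LinearMap.range (onePlus (tau4 R M)) := by
  induction u using homogeneous_induction (isInternal_gr2 R M) with
  | mem i v hv =>
    have hne : m ≠ i + i := by
      rintro rfl
      exact Int.not_even_iff_odd.2 hm ⟨i, rfl⟩
    rw [gradedProj_of_mem_of_ne _ (pairing_mem_gr4 hv hv) hne]
    exact zero_mem _
  | zero => simp
  | add v w hv hw =>
    exact (Submodule.sub_mem_iff_left _ (add_mem hv hw)).1
      (gradedProj_add_pairing_self_sub_mem_range m v w)

theorem gradedProj_pairing_self_sub_mem_range (n : ℤ) (u : T2 R M) :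
    gradedProj (isInternal_gr4 R M) (2 * n) (pairing R M u u) -
        pairing R M (gradedProj (isInternal_gr2 R M) n u) (gradedProj (isInternal_gr2 R M) n u) ∈
      LinearMap.range (onePlus (tau4 R M)) := by
  induction u using homogeneous_induction (isInternal_gr2 R M) with
  | mem i v hv =>
    rw [gradedProj_eq_ite_of_mem _ (pairing_mem_gr4 hv hv), gradedProj_eq_ite_of_mem _ hv]
    have hiff : 2 * n = i + i ↔ n = i := by omega
    simp only [hiff]
    split_ifs <;> simp
  | zero => simp
  | add v w hv hw =>
    have hproj := gradedProj_add_pairing_self_sub_mem_range (2 * n) v w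
    have hsq := add_apply_self_sub_mem_range_onePlus (μ := pairing R M) tau4_pairing
      (gradedProj (isInternal_gr2 R M) n v) (gradedProj (isInternal_gr2 R M) n w)
    convert sub_mem (add_mem hproj (add_mem hv hw)) hsq using 1
    rw [map_add (gradedProj (isInternal_gr2 R M) n)]
    abel

theorem IsCellRetract.exists_sub_pairing_self_mem (hR : IsCellRetract R) {n : ℤ} {x : T4 R M}
    (hx : x ∈ gr4 R M (2 * n)) (hτ : onePlus (tau4 R M) x ∈ rel4 R M) :
    ∃ u ∈ gr2 R M n,
      x - pairing R M u u ∈ rel4 R M ⊔ LinearMap.range (onePlus (tau4 R M)) := by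
  obtain ⟨u, hu⟩ := (hR.isFrobeniusIso_pairing M).exists_sub_apply_self_mem x hτ
  refine ⟨gradedProj _ n u, gradedProj_mem (isInternal_gr2 R M) n u, ?_⟩
  have hproj := gradedProj_mem_rel4_sup_range (2 * n) hu
  rw [map_sub, gradedProj_of_mem _ hx] at hproj
  simpa using add_mem hproj
    (Submodule.mem_sup_right (gradedProj_pairing_self_sub_mem_range n u))

theorem IsCellRetract.mem_rel4_sup_range_of_odd (hR : IsCellRetract R) {m : ℤ} (hm : Odd m)
    {x : T4 R M} (hx : x ∈ gr4 R M m) (hτ : onePlus (tau4 R M) x ∈ rel4 R M) :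
    x ∈ rel4 R M ⊔ LinearMap.range (onePlus (tau4 R M)) := by
  obtain ⟨u, hu⟩ := (hR.isFrobeniusIso_pairing M).exists_sub_apply_self_mem x hτ
  have hproj := gradedProj_mem_rel4_sup_range m hu
  rw [map_sub, gradedProj_of_mem _ hx] at hproj
  exact (Submodule.sub_mem_iff_left _
    (Submodule.mem_sup_right (gradedProj_pairing_self_mem_range_of_odd hm u))).1 hproj

end GradedSquares

namespace RelBicx

section RowFiltration

variable {k : Type} [CommRing k] {B : RelBicx k}

/-- The differentials of the bicomplex have bidegrees `(-1, 0)` and `(0, -1)`. -/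
structure IsHomogeneous (B : RelBicx k) : Prop where
  dh_mem_gr {p q : ℤ} {x : B.T} (hx : x ∈ B.gr p q) : B.dh x ∈ B.gr (p - 1) q
  dv_mem_gr {p q : ℤ} {x : B.T} (hx : x ∈ B.gr p q) : B.dv x ∈ B.gr p (q - 1)

lemma mem_Frow {p j q n : ℤ} {x : B.T} (hx : x ∈ B.gr p j) (hj : j ≤ q) (hn : p + j = n) :
    x ∈ B.Frow q n := by
  obtain rfl : p = n - j := by omega
  exact Submodule.mem_iSup_of_mem j (Submodule.mem_iSup_of_mem hj hx)

lemma Frow_sup_N_le (p q : ℤ) :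
    B.Frow q (p + q) ⊔ B.N ≤ B.gr p q ⊔ (B.Frow (q - 1) (p + q) ⊔ B.N) := by
  rw [← sup_assoc]
  refine sup_le_sup_right (iSup₂_le fun j hj => ?_) B.N
  rcases hj.lt_or_eq with hj | rfl
  · exact le_sup_of_le_right (le_iSup₂_of_le j (by omega) le_rfl)
  · rw [add_sub_cancel_right]
    exact le_sup_left

namespace IsHomogeneous

lemma D_mem_Frow (hB : B.IsHomogeneous) {q n : ℤ} {x : B.T} (hx : x ∈ B.Frow q n) :
    B.D x ∈ B.Frow q (n - 1) := by
  refine (iSup₂_le fun j hj x hx => ?_ : B.Frow q n ≤ (B.Frow q (n - 1)).comap B.D) hx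
  exact add_mem (mem_Frow (hB.dh_mem_gr hx) hj (by ring))
    (mem_Frow (hB.dv_mem_gr hx) (by omega) (by ring))

lemma Frow_le_Zpage_zero (hB : B.IsHomogeneous) (q n : ℤ) :
    B.Frow q n ≤ B.Zpage B.Frow 0 q n := fun x hx => by
  refine ⟨Submodule.mem_sup_left hx, ?_⟩
  rw [sub_zero]
  exact Submodule.mem_sup_left (hB.D_mem_Frow hx)

lemma Frow_sup_N_le_Bpage_one (hB : B.IsHomogeneous) (q n : ℤ) :
    B.Frow (q - 1) n ⊔ B.N ≤ B.Bpage B.Frow 1 q n :=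
  sup_le_sup_right (le_sup_of_le_right (hB.Frow_le_Zpage_zero _ _)) B.N

lemma mem_Zpage_one (hB : B.IsHomogeneous) {p q : ℤ} {x : B.T} (hx : x ∈ B.gr p q)
    (hN : B.dh x ∈ B.N) :
    x ∈ B.Zpage B.Frow 1 q (p + q) :=
  ⟨Submodule.mem_sup_left (mem_Frow hx le_rfl rfl),
    add_mem (Submodule.mem_sup_right hN)
      (Submodule.mem_sup_left (mem_Frow (hB.dv_mem_gr hx) le_rfl (by ring)))⟩

lemma dh_mem_Bpage_one (hB : B.IsHomogeneous) {p q : ℤ} {x : B.T} (hx : x ∈ B.gr (p + 1) q) :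
    B.dh x ∈ B.Bpage B.Frow 1 q (p + q) := by
  have hD : B.D x ∈ B.Bpage B.Frow 1 q (p + q) := by
    refine Submodule.mem_sup_left (Submodule.mem_sup_left ⟨x, ?_, rfl⟩)
    rw [sub_self, add_sub_cancel_right]
    exact hB.Frow_le_Zpage_zero _ _ (mem_Frow hx le_rfl (by ring))
  have hdv : B.dv x ∈ B.Bpage B.Frow 1 q (p + q) :=
    hB.Frow_sup_N_le_Bpage_one _ _ <|
      Submodule.mem_sup_left <| mem_Frow (hB.dv_mem_gr hx) le_rfl (by ring)
  exact (Submodule.add_mem_iff_left _ hdv).1 hD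

end IsHomogeneous

end RowFiltration

end RelBicx

section TateBicomplex

variable {A : DGA (ZMod 2)} {R M : DGBimod A}

lemma d2_mem_gr2 {n : ℤ} {v : T2 R M} (hv : v ∈ gr2 R M n) : d2 R M v ∈ gr2 R M (n - 1) := by
  refine (Submodule.span_le (p := (gr2 R M (n - 1)).comap (d2 R M))).2 ?_ hv
  rintro _ ⟨i, j, r, hr, m, hm, rfl, rfl⟩
  rw [SetLike.mem_coe, Submodule.mem_comap, d2_tmul]
  refine add_mem ?_ ?_
  · exact Submodule.subset_span ⟨_, _, _, R.d_gr i r hr, m, hm, by ring, rfl⟩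
  · exact Submodule.subset_span ⟨_, _, r, hr, _, M.d_gr j m hm, by ring, rfl⟩

lemma d4_mem_gr4 {n : ℤ} {x : T4 R M} (hx : x ∈ gr4 R M n) : d4 R M x ∈ gr4 R M (n - 1) := by
  rw [gr4_eq_map_tensorGrading] at hx
  refine ((Submodule.map_span_le _ _ ((gr4 R M (n - 1)).comap (d4 R M))).2 ?_ :
    _ ≤ (gr4 R M (n - 1)).comap (d4 R M)) hx
  rintro _ ⟨i, j, v, hv, w, hw, rfl, rfl⟩
  change d4 R M (pairing R M v w) ∈ gr4 R M (i + j - 1)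
  rw [d4_pairing]
  refine add_mem ?_ ?_
  · rw [← sub_add_eq_add_sub]
    exact pairing_mem_gr4 (d2_mem_gr2 hv) hw
  · rw [add_sub_assoc]
    exact pairing_mem_gr4 hv (d2_mem_gr2 hw)

variable (R M) in
/-- The inclusion of the Hochschild complex as column `p` of the Hochschild–Tate bicomplex. -/
def tateColumn (p : ℤ) : T4 R M →ₗ[ZMod 2] (TateBicx R M).T := Finsupp.lsingle p

variable (R M) in
/-- The projection of the Hochschild–Tate bicomplex onto its column `p`. -/
def tateComponent (p : ℤ) : (TateBicx R M).T →ₗ[ZMod 2] T4 R M := Finsupp.lapply p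

lemma tateComponent_tateColumn (i p : ℤ) (x : T4 R M) :
    tateComponent R M i (tateColumn R M p x) = if p = i then x else 0 :=
  Finsupp.single_apply

lemma tateColumn_mem_gr {q : ℤ} (p : ℤ) {x : T4 R M} (hx : x ∈ gr4 R M q) :
    tateColumn R M p x ∈ (TateBicx R M).gr p q :=
  ⟨x, hx, rfl⟩

lemma mem_TateBicx_N {z : (TateBicx R M).T} :
    z ∈ (TateBicx R M).N ↔ ∀ i, tateComponent R M i z ∈ rel4 R M :=
  Submodule.mem_iInf (fun i : ℤ => (rel4 R M).comap (Finsupp.lapply i)) (x := (z : ℤ →₀ T4 R M))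

lemma tateColumn_mem_N (p : ℤ) {x : T4 R M} (hx : x ∈ rel4 R M) :
    tateColumn R M p x ∈ (TateBicx R M).N :=
  mem_TateBicx_N.2 fun i => by
    rw [tateComponent_tateColumn]
    split_ifs
    exacts [hx, zero_mem _]

lemma dh_tateColumn (p : ℤ) (x : T4 R M) :
    (TateBicx R M).dh (tateColumn R M p x) = tateColumn R M (p - 1) (onePlus (tau4 R M) x) := by
  change Finsupp.mapDomain (· - 1)
    (Finsupp.mapRange (onePlus (tau4 R M)) (map_zero _) (Finsupp.single p x)) = _
  rw [Finsupp.mapRange_single, Finsupp.mapDomain_single]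
  rfl

lemma dv_tateColumn (p : ℤ) (x : T4 R M) :
    (TateBicx R M).dv (tateColumn R M p x) = tateColumn R M p (d4 R M x) :=
  Finsupp.mapRange_single (hf := map_zero _)

lemma tateComponent_dh (p : ℤ) (z : (TateBicx R M).T) :
    tateComponent R M p ((TateBicx R M).dh z) =
      onePlus (tau4 R M) (tateComponent R M (p + 1) z) := by
  obtain ⟨i, rfl⟩ : ∃ i, p = i - 1 := ⟨p + 1, by ring⟩
  rw [sub_add_cancel]
  exact Finsupp.mapDomain_apply (sub_left_injective (b := (1 : ℤ))) _ i

lemma tateComponent_dv (p : ℤ) (z : (TateBicx R M).T) :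
    tateComponent R M p ((TateBicx R M).dv z) = d4 R M (tateComponent R M p z) :=
  rfl

variable (R M) in
lemma isHomogeneous_TateBicx : (TateBicx R M).IsHomogeneous where
  dh_mem_gr := by
    rintro p q _ ⟨x, hx, rfl⟩
    exact dh_tateColumn p x ▸ tateColumn_mem_gr (p - 1) (onePlus_tau4_mem_gr4 hx)
  dv_mem_gr := by
    rintro p q _ ⟨x, hx, rfl⟩
    exact dv_tateColumn p x ▸ tateColumn_mem_gr p (d4_mem_gr4 hx)

lemma tateComponent_mem_rel4_of_mem_Frow_sup_N {q n i : ℤ} {z : (TateBicx R M).T}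
    (hz : z ∈ (TateBicx R M).Frow q n ⊔ (TateBicx R M).N) (hi : q < n - i) :
    tateComponent R M i z ∈ rel4 R M := by
  suffices h : (TateBicx R M).Frow q n ⊔ (TateBicx R M).N ≤
      (rel4 R M).comap (tateComponent R M i) from h hz
  refine sup_le (iSup₂_le fun j hj => ?_) fun z hz => mem_TateBicx_N.1 hz i
  rintro _ ⟨x, -, rfl⟩
  change tateComponent R M i (tateColumn R M (n - j) x) ∈ rel4 R M
  rw [tateComponent_tateColumn, if_neg (by omega)]
  exact zero_mem _

lemma onePlus_tau4_mem_rel4 {x : T4 R M} (hx : x ∈ rel4 R M) :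
    onePlus (tau4 R M) x ∈ rel4 R M :=
  add_mem hx (rel4_le_comap_tau4 hx)

lemma tateComponent_D (p : ℤ) (z : (TateBicx R M).T) :
    tateComponent R M p ((TateBicx R M).D z) =
      onePlus (tau4 R M) (tateComponent R M (p + 1) z) + d4 R M (tateComponent R M p z) := by
  rw [RelBicx.D, LinearMap.add_apply, map_add, tateComponent_dh, tateComponent_dv]

lemma tateColumn_mem_Zpage {q : ℤ} (p : ℤ) {x : T4 R M} (hx : x ∈ gr4 R M q)
    (hτ : onePlus (tau4 R M) x ∈ rel4 R M) :
    tateColumn R M p x ∈ (TateBicx R M).Zpage (TateBicx R M).Frow 1 q (p + q) :=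
  (isHomogeneous_TateBicx R M).mem_Zpage_one (tateColumn_mem_gr p hx)
    (dh_tateColumn p x ▸ tateColumn_mem_N (p - 1) hτ)

lemma onePlus_tau4_tateComponent_mem_rel4 {p q : ℤ} {z : (TateBicx R M).T}
    (hz : z ∈ (TateBicx R M).Zpage (TateBicx R M).Frow 1 q (p + q)) :
    onePlus (tau4 R M) (tateComponent R M p z) ∈ rel4 R M := by
  have hDz : tateComponent R M (p - 1) ((TateBicx R M).D z) ∈ rel4 R M :=
    tateComponent_mem_rel4_of_mem_Frow_sup_N hz.2 (by omega)
  rw [tateComponent_D, sub_add_cancel] at hDz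
  have hz' : tateComponent R M (p - 1) z ∈ rel4 R M :=
    tateComponent_mem_rel4_of_mem_Frow_sup_N hz.1 (by omega)
  have hd : d4 R M (tateComponent R M (p - 1) z) ∈ rel4 R M := rel4_le_comap_d4 hz'
  exact (Submodule.add_mem_iff_left _ hd).1 hDz

theorem exists_sub_tateColumn_mem_Bpage {p q : ℤ} {z : (TateBicx R M).T}
    (hz : z ∈ (TateBicx R M).Zpage (TateBicx R M).Frow 1 q (p + q)) :
    ∃ x ∈ gr4 R M q, onePlus (tau4 R M) x ∈ rel4 R M ∧
      z - tateColumn R M p x ∈ (TateBicx R M).Bpage (TateBicx R M).Frow 1 q (p + q) := by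
  obtain ⟨_, ⟨x, hx, rfl⟩, e, he, rfl⟩ := Submodule.mem_sup.1 (RelBicx.Frow_sup_N_le p q hz.1)
  change tateColumn R M p x + e ∈ _ at hz
  refine ⟨x, hx, ?_, ?_⟩
  · have hsum := onePlus_tau4_tateComponent_mem_rel4 hz
    have herr : onePlus (tau4 R M) (tateComponent R M p e) ∈ rel4 R M :=
      onePlus_tau4_mem_rel4 (tateComponent_mem_rel4_of_mem_Frow_sup_N he (by omega))
    rw [map_add, map_add, tateComponent_tateColumn, if_pos rfl] at hsum
    exact (Submodule.add_mem_iff_left _ herr).1 hsum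
  · convert (isHomogeneous_TateBicx R M).Frow_sup_N_le_Bpage_one q (p + q) he
    exact add_sub_cancel_left _ e

lemma tateComponent_mem_of_mem_Bpage {p q : ℤ} {z : (TateBicx R M).T}
    (hz : z ∈ (TateBicx R M).Bpage (TateBicx R M).Frow 1 q (p + q)) :
    tateComponent R M p z ∈ rel4 R M ⊔ LinearMap.range (onePlus (tau4 R M)) := by
  suffices h : (TateBicx R M).Bpage (TateBicx R M).Frow 1 q (p + q) ≤
      (rel4 R M ⊔ LinearMap.range (onePlus (tau4 R M))).comap (tateComponent R M p) from h hz
  refine sup_le (sup_le ?_ fun w hw => ?_) fun w hw => ?_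
  · rintro _ ⟨b, hb, rfl⟩
    rw [Submodule.mem_comap, tateComponent_D, add_comm]
    exact Submodule.add_mem_sup (rel4_le_comap_d4
      (tateComponent_mem_rel4_of_mem_Frow_sup_N hb.1 (by omega))) ⟨_, rfl⟩
  · exact Submodule.mem_sup_left (tateComponent_mem_rel4_of_mem_Frow_sup_N hw.1 (by omega))
  · exact Submodule.mem_sup_left (mem_TateBicx_N.1 hw p)

theorem tateColumn_mem_Bpage_iff {p q : ℤ} {x : T4 R M} (hx : x ∈ gr4 R M q) :
    tateColumn R M p x ∈ (TateBicx R M).Bpage (TateBicx R M).Frow 1 q (p + q) ↔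
      x ∈ rel4 R M ⊔ LinearMap.range (onePlus (tau4 R M)) := by
  refine ⟨fun h => ?_, fun h => ?_⟩
  · simpa only [tateComponent_tateColumn, if_pos] using tateComponent_mem_of_mem_Bpage h
  · obtain ⟨t, ht, hrel⟩ := exists_gradedProj_sub_onePlus_tau4_mem_rel4 q h
    rw [gradedProj_of_mem _ hx] at hrel
    have hcol := (isHomogeneous_TateBicx R M).dh_mem_Bpage_one (p := p)
      (tateColumn_mem_gr (p + 1) ht)
    rw [dh_tateColumn, add_sub_cancel_right] at hcol
    rw [← sub_add_cancel x (onePlus (tau4 R M) t), map_add]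
    exact add_mem (Submodule.mem_sup_right (tateColumn_mem_N p hrel)) hcol

end TateBicomplex

section FrobeniusIsomorphism

variable {A : DGA (ZMod 2)} {R M : DGBimod A}

variable (R M) in
/-- The preimage in `R ⊗ M ⊗ R ⊗ M` of the kernel of `1 + τ` on `HC_q(M ⊗̃_A M)`. -/
def tateCycles (q : ℤ) : Submodule (ZMod 2) (T4 R M) :=
  gr4 R M q ⊓ (rel4 R M).comap (onePlus (tau4 R M))

variable (R M) in
/-- The map sending a chain in the kernel of `1 + τ` to its class in `ʰᵛE¹_{p,q}`, which is its
class in the Tate cohomology `ker (1 + τ) / Im (1 + τ)`. -/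
def tateClass (p q : ℤ) : tateCycles R M q →ₗ[ZMod 2] (TateBicx R M).hvE 1 p q :=
  Submodule.mkQ _ ∘ₗ (tateColumn R M p).restrict fun _ hx => tateColumn_mem_Zpage p hx.1 hx.2

lemma tateClass_eq_zero_iff {p q : ℤ} (x : tateCycles R M q) :
    tateClass R M p q x = 0 ↔
      (x : T4 R M) ∈ rel4 R M ⊔ LinearMap.range (onePlus (tau4 R M)) :=
  (Submodule.Quotient.mk_eq_zero _).trans (tateColumn_mem_Bpage_iff x.2.1)

lemma tateClass_surjective (p q : ℤ) : Function.Surjective (tateClass R M p q) := fun z => by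
  obtain ⟨⟨z, hz⟩, rfl⟩ := Submodule.Quotient.mk_surjective _ z
  obtain ⟨x, hx, hτ, hB⟩ := exists_sub_tateColumn_mem_Bpage hz
  refine ⟨⟨x, hx, hτ⟩, Eq.symm ?_⟩
  exact (Submodule.Quotient.eq _).2 hB

lemma tateClass_eq_iff {p q : ℤ} (x y : tateCycles R M q) :
    tateClass R M p q x = tateClass R M p q y ↔
      (x - y : T4 R M) ∈ rel4 R M ⊔ LinearMap.range (onePlus (tau4 R M)) := by
  rw [← sub_eq_zero, ← map_sub, tateClass_eq_zero_iff, Submodule.coe_sub]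

lemma pairing_self_mem_tateCycles {n : ℤ} {u : T2 R M} (hu : u ∈ gr2 R M n) :
    pairing R M u u ∈ tateCycles R M (2 * n) := by
  refine ⟨two_mul n ▸ pairing_mem_gr4 hu hu, ?_⟩
  rw [SetLike.mem_coe, Submodule.mem_comap, onePlus_tau4_pairing_self]
  exact zero_mem _

variable (R M) in
/-- The map `ξ ↦ ξ^{⊗2} + Im (1 + τ)`, before passing to the quotient by the relations of
`HC_n(M)`. -/
def frobenius (n p : ℤ) : gr2 R M n →ₗ[ZMod 2] (TateBicx R M).hvE 1 p (2 * n) :=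
  AddMonoidHom.toZModLinearMap 2 <| AddMonoidHom.mk'
    (fun u => tateClass R M p (2 * n) ⟨pairing R M u u, pairing_self_mem_tateCycles u.2⟩)
    fun u v => by
      rw [← map_add, tateClass_eq_iff]
      exact Submodule.mem_sup_right (add_apply_self_sub_mem_range_onePlus tau4_pairing _ _)

lemma frobenius_apply {n : ℤ} (p : ℤ) (u : gr2 R M n) :
    frobenius R M n p u =
      tateClass R M p (2 * n) ⟨pairing R M u u, pairing_self_mem_tateCycles u.2⟩ :=
  rfl

lemma frobenius_sum {L : Type*} [Fintype L] {n : ℤ} (p : ℤ) (c : L → ZMod 2)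
    (u : L → gr2 R M n)
    (h : ∑ l, (c l * c l) • pairing R M (u l) (u l) ∈ tateCycles R M (2 * n)) :
    frobenius R M n p (∑ l, c l • u l) =
      tateClass R M p (2 * n) ⟨∑ l, (c l * c l) • pairing R M (u l) (u l), h⟩ := by
  have idem : ∀ c : ZMod 2, c * c = c := by decide
  simp only [map_sum, map_smul, frobenius_apply]
  simp only [← map_smul, ← map_sum]
  congr 1
  ext
  simp [idem]

lemma IsCellRetract.ker_frobenius (hR : IsCellRetract R) (n p : ℤ) :
    LinearMap.ker (frobenius R M n p) = (rel2 R M).comap (gr2 R M n).subtype := by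
  ext u
  rw [LinearMap.mem_ker, frobenius_apply, tateClass_eq_zero_iff,
    (hR.isFrobeniusIso_pairing M).apply_self_mem_iff, Submodule.mem_comap, Submodule.subtype_apply]

lemma IsCellRetract.frobenius_surjective (hR : IsCellRetract R) (n p : ℤ) :
    Function.Surjective (frobenius R M n p) := fun z => by
  obtain ⟨⟨x, hx, hτ⟩, rfl⟩ := tateClass_surjective p (2 * n) z
  obtain ⟨u, hu, hxu⟩ := hR.exists_sub_pairing_self_mem hx hτ
  exact ⟨⟨u, hu⟩, ((tateClass_eq_iff _ _).2 hxu).symm⟩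

/-- The isomorphism `HC_n(M) ≃ ʰᵛE¹_{p,2n}` induced by `ξ ↦ ξ^{⊗2}`. -/
def frobeniusEquiv (hR : IsCellRetract R) (M : DGBimod A) (n p : ℤ) :
    HCdeg R M n ≃ₗ[ZMod 2] (TateBicx R M).hvE 1 p (2 * n) :=
  (LinearMap.quotientInfEquivSupQuotient (gr2 R M n) (rel2 R M)).symm ≪≫ₗ
    Submodule.quotEquivOfEq _ _ (by
      rw [hR.ker_frobenius n p, Submodule.comap_subtype_self, top_inf_eq]) ≪≫ₗ
    (frobenius R M n p).quotKerEquivOfSurjective (hR.frobenius_surjective n p)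

lemma frobeniusEquiv_mk (hR : IsCellRetract R) {n : ℤ} (p : ℤ) {u : T2 R M}
    (hu : u ∈ gr2 R M n) (hu' : u ∈ gr2 R M n ⊔ rel2 R M) :
    frobeniusEquiv hR M n p (Submodule.Quotient.mk ⟨u, hu'⟩) = frobenius R M n p ⟨u, hu⟩ := by
  rw [frobeniusEquiv, LinearEquiv.trans_apply, LinearEquiv.trans_apply,
    LinearMap.quotientInfEquivSupQuotient_symm_apply_left _ _ _ hu]
  rfl

theorem IsCellRetract.subsingleton_hvE_of_odd (hR : IsCellRetract R) (M : DGBimod A) (p : ℤ)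
    {q : ℤ} (hq : Odd q) : Subsingleton ((TateBicx R M).hvE 1 p q) := by
  refine subsingleton_of_forall_eq 0 fun z => ?_
  obtain ⟨⟨x, hx, hτ⟩, rfl⟩ := tateClass_surjective p q z
  exact (tateClass_eq_zero_iff _).2 (hR.mem_rel4_sup_range_of_odd hq hx hτ)

end FrobeniusIsomorphism

theorem frobenius_isomorphism_E1_general {A : DGA (ZMod 2)} {R : DGBimod A}
    (hR : IsCellRetract R) (M : DGBimod A) :
    (∀ n p : ℤ,
      ∃ e : HCdeg R M n ≃ₗ[ZMod 2] (TateBicx R M).hvE 1 p (2 * n),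
        ∀ (L : Type) (_ : Fintype L) (c : L → ZMod 2) (r : L → R.V) (m : L → M.V),
          (∀ l, ∃ i j, r l ∈ R.gr i ∧ m l ∈ M.gr j ∧ i + j = n) →
          ∀ (hx : (∑ l, c l • (r l ⊗ₜ[ZMod 2] m l)) ∈ gr2 R M n ⊔ rel2 R M)
            (hsq : Finsupp.single p
                (∑ l, (c l * c l) •
                  (r l ⊗ₜ[ZMod 2] (m l ⊗ₜ[ZMod 2] (r l ⊗ₜ[ZMod 2] m l)))) ∈
              (TateBicx R M).Zpage (TateBicx R M).Frow 1 (2 * n) (p + 2 * n)),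
            e (Submodule.Quotient.mk ⟨∑ l, c l • (r l ⊗ₜ[ZMod 2] m l), hx⟩) =
              Submodule.Quotient.mk ⟨Finsupp.single p
                (∑ l, (c l * c l) •
                  (r l ⊗ₜ[ZMod 2] (m l ⊗ₜ[ZMod 2] (r l ⊗ₜ[ZMod 2] m l)))), hsq⟩) ∧
    (∀ p k : ℤ, Subsingleton ((TateBicx R M).hvE 1 p (2 * k + 1))) := by
  refine ⟨fun n p => ⟨frobeniusEquiv hR M n p, fun L _ c r m hrm hx hsq => ?_⟩,
    fun p k => hR.subsingleton_hvE_of_odd M p ⟨k, rfl⟩⟩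
  have hmem (l : L) : r l ⊗ₜ m l ∈ gr2 R M n := by
    obtain ⟨i, j, hr, hm, rfl⟩ := hrm l
    exact tmul_mem_tensorGrading hr hm
  let u (l : L) : gr2 R M n := ⟨r l ⊗ₜ m l, hmem l⟩
  have hsum : ∑ l, c l • r l ⊗ₜ m l = ((∑ l, c l • u l : gr2 R M n) : T2 R M) := by simp [u]
  have hcycle : ∑ l, (c l * c l) • pairing R M (u l) (u l) ∈ tateCycles R M (2 * n) :=
    sum_mem fun l _ => Submodule.smul_mem _ _ (pairing_self_mem_tateCycles (u l).2)
  simp only [hsum]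
  rw [frobeniusEquiv_mk hR p (∑ l, c l • u l).2]
  exact frobenius_sum p c u hcycle

/-- **Proposition 3.9.** For each `k`, the assignment `ξ ↦ ξ^{⊗2} + Im(1+τ)` is an
`𝔽₂`-linear isomorphism of `HC_k(M)` onto `ʰᵛE¹_{p,2k}` for every `p`; moreover
`ʰᵛE¹_{p,2k+1} = 0`. -/
theorem frobenius_isomorphism_E1
    (A : DGA (ZMod 2)) (R : DGBimod A) (ρ : R.V →ₗ[ZMod 2] A.diag.V)
    (hres : IsResolution R A.diag ρ) (M : DGBimod A) :
    (∀ n p : ℤ,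
      ∃ e : HCdeg R M n ≃ₗ[ZMod 2] (TateBicx R M).hvE 1 p (2 * n),
        ∀ (L : Type) (_ : Fintype L) (c : L → ZMod 2) (r : L → R.V) (m : L → M.V),
          (∀ l, ∃ i j, r l ∈ R.gr i ∧ m l ∈ M.gr j ∧ i + j = n) →
          ∀ (hx : (∑ l, c l • (r l ⊗ₜ[ZMod 2] m l)) ∈ gr2 R M n ⊔ rel2 R M)
            (hsq : Finsupp.single p
                (∑ l, (c l * c l) •
                  (r l ⊗ₜ[ZMod 2] (m l ⊗ₜ[ZMod 2] (r l ⊗ₜ[ZMod 2] m l)))) ∈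
              (TateBicx R M).Zpage (TateBicx R M).Frow 1 (2 * n) (p + 2 * n)),
            e (Submodule.Quotient.mk ⟨∑ l, c l • (r l ⊗ₜ[ZMod 2] m l), hx⟩) =
              Submodule.Quotient.mk ⟨Finsupp.single p
                (∑ l, (c l * c l) •
                  (r l ⊗ₜ[ZMod 2] (m l ⊗ₜ[ZMod 2] (r l ⊗ₜ[ZMod 2] m l)))), hsq⟩) ∧
    (∀ p k : ℤ, Subsingleton ((TateBicx R M).hvE 1 p (2 * k + 1))) :=
  frobenius_isomorphism_E1_general hres.1 M

end LT
end
end
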